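/- arXiv:math/0610188 — 7 statements merged into one kernel-verified Lean document; each statement's English description precedes it below -/
import Mathlib

section
/- Let G = (V,E) be a triangle-free graph on n vertices with maximum degree Δ, let 0 < β ≤ 1 and k ≥ Δ + 2/β. Let X be a uniformly random proper k-coloring of G. Then Pr(∃ v ∈ V with |A(X,v)| < k·(e^{−Δ/k} − β)) ≤ n·e^{−β²k/8}. -/
namespace LU

open Function

variable {V : Type*} [Fintype V] [DecidableEq V] {k : ℕ}

/-- available colors -/
def av (G : SimpleGraph V) [DecidableRel G.Adj] (X : V → Fin k) (v : V) : Finset (Fin k) :=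
  Finset.univ.filter fun c => ∀ w ∈ G.neighborFinset v, X w ≠ c

/-- heat-bath averaging at `a` -/
noncomputable def EE (G : SimpleGraph V) [DecidableRel G.Adj] (a : V)
    (f : (V → Fin k) → ℝ) (X : V → Fin k) : ℝ :=
  (∑ c ∈ av G X a, f (update X a c)) / ((av G X a).card : ℝ)

/-- iterated averaging -/
noncomputable def EL (G : SimpleGraph V) [DecidableRel G.Adj] :
    List V → ((V → Fin k) → ℝ) → (V → Fin k) → ℝ
  | [], f => f
  | a :: l, f => EE G a (EL G l f)

variable (G : SimpleGraph V) [DecidableRel G.Adj]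

lemma av_update (X : V → Fin k) (a b : V) (c : Fin k) (h : ¬ G.Adj a b) :
    av G (update X a c) b = av G X b := by
  unfold av
  ext d
  simp only [Finset.mem_filter, Finset.mem_univ, true_and, SimpleGraph.mem_neighborFinset]
  refine forall_congr' fun w => forall_congr' fun hw => ?_
  have : w ≠ a := by
    rintro rfl
    exact h hw.symm
  rw [update_of_ne this]

lemma av_card (X : V → Fin k) (a : V) : k ≤ (av G X a).card + G.degree a := by
  have h : av G X a = ((G.neighborFinset a).image X)ᶜ := by
    ext d
    simp [av]
  have h2 := Finset.card_compl ((G.neighborFinset a).image X)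
  have h3 : ((G.neighborFinset a).image X).card ≤ G.degree a := by
    rw [← SimpleGraph.card_neighborFinset_eq_degree]
    exact Finset.card_image_le
  rw [h, h2, Fintype.card_fin]
  omega

lemma EE_mono (a : V) (f g : (V → Fin k) → ℝ) (h : ∀ X, f X ≤ g X) (X : V → Fin k) :
    EE G a f X ≤ EE G a g X := by
  unfold EE
  gcongr
  exact h _

lemma EE_const_mul (a : V) (f : (V → Fin k) → ℝ) (r : ℝ) (X : V → Fin k) :
    EE G a (fun X => r * f X) X = r * EE G a f X := by
  unfold EE
  rw [← Finset.mul_sum, mul_div_assoc]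

lemma EE_mul (a : V) (q f : (V → Fin k) → ℝ) (hq : ∀ X c, q (update X a c) = q X)
    (X : V → Fin k) :
    EE G a (fun X => q X * f X) X = q X * EE G a f X := by
  unfold EE
  simp only [hq]
  rw [← Finset.mul_sum, mul_div_assoc]

lemma EE_sum {ι : Type*} (s : Finset ι) (a : V) (f : ι → (V → Fin k) → ℝ) (X : V → Fin k) :
    EE G a (fun X => ∑ i ∈ s, f i X) X = ∑ i ∈ s, EE G a (f i) X := by
  unfold EE
  rw [Finset.sum_comm, Finset.sum_div]

lemma EL_sum {ι : Type*} (s : Finset ι) (l : List V) (f : ι → (V → Fin k) → ℝ)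
    (X : V → Fin k) :
    EL G l (fun X => ∑ i ∈ s, f i X) X = ∑ i ∈ s, EL G l (f i) X := by
  induction l generalizing X with
  | nil => rfl
  | cons a l ih =>
    simp only [EL]
    rw [← EE_sum]
    congr 1
    funext Y
    exact ih Y

/-- Lipschitz on the coordinates in N -/
def Lip (N : Finset V) (f : (V → Fin k) → ℝ) : Prop :=
  ∀ X, ∀ a ∈ N, ∀ c, |f (update X a c) - f X| ≤ 1

variable {G}

lemma Lip_EE {N : Finset V} (hN : ∀ a ∈ N, ∀ b ∈ N, ¬ G.Adj a b) {f : (V → Fin k) → ℝ}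
    (hf : Lip N f) {b : V} (hb : b ∈ N) : Lip N (EE G b f) := by
  intro X a ha c
  unfold EE
  rw [av_update G X a b c (hN a ha b hb), ← sub_div, ← Finset.sum_sub_distrib, abs_div,
    Nat.abs_cast]
  apply div_le_one_of_le₀ _ (Nat.cast_nonneg _)
  refine (Finset.abs_sum_le_sum_abs _ _).trans ?_
  have : ((av G X b).card : ℝ) = ∑ i ∈ av G X b, (1 : ℝ) := by simp
  rw [this]
  apply Finset.sum_le_sum
  intro d _
  by_cases hab : a = b
  · subst hab
    simp
  · rw [update_comm hab]
    exact hf _ a ha c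

lemma Lip_EL {N : Finset V} (hN : ∀ a ∈ N, ∀ b ∈ N, ¬ G.Adj a b) {f : (V → Fin k) → ℝ}
    (hf : Lip N f) (l : List V) (hl : ∀ a ∈ l, a ∈ N) : Lip N (EL G l f) := by
  induction l with
  | nil => exact hf
  | cons a l ih =>
    exact Lip_EE hN (ih fun b hb => hl b (List.mem_cons_of_mem _ hb)) (hl a List.mem_cons_self)

lemma exp_le_cosh (s D : ℝ) (hD : |D| ≤ 1) :
    Real.exp (s * D) ≤ Real.cosh s + D * Real.sinh s := by
  have h := abs_le.1 hD
  have hc := convexOn_exp.2 (Set.mem_univ s) (Set.mem_univ (-s))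
    (show 0 ≤ (1 + D) / 2 by linarith) (show 0 ≤ (1 - D) / 2 by linarith) (by ring)
  simp only [smul_eq_mul] at hc
  rw [Real.cosh_eq, Real.sinh_eq]
  have e : (1 + D) / 2 * s + (1 - D) / 2 * -s = s * D := by ring
  rw [e] at hc
  linarith

lemma hoeff {ι : Type*} (S : Finset ι) (hS : S.Nonempty) (x : ι → ℝ)
    (hx : ∀ i ∈ S, ∀ j ∈ S, |x i - x j| ≤ 1) (s : ℝ) :
    (∑ i ∈ S, Real.exp (-s * x i)) / (S.card : ℝ) ≤
      Real.exp (s ^ 2 / 2) * Real.exp (-s * ((∑ i ∈ S, x i) / (S.card : ℝ))) := by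
  have hc : (0 : ℝ) < S.card := by exact_mod_cast hS.card_pos
  set m := (∑ i ∈ S, x i) / (S.card : ℝ) with hm
  have hmS : ∑ i ∈ S, x i = m * S.card := by rw [hm]; field_simp
  clear_value m
  clear hm
  have hD : ∀ i ∈ S, |m - x i| ≤ 1 := by
    intro i hi
    have e : m - x i = (∑ j ∈ S, (x j - x i)) / S.card := by
      rw [Finset.sum_sub_distrib, hmS]
      simp
      field_simp
    rw [e, abs_div, Nat.abs_cast]
    apply div_le_one_of_le₀ _ hc.le
    refine (Finset.abs_sum_le_sum_abs _ _).trans ?_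
    refine (Finset.sum_le_sum fun j hj => hx j hj i hi).trans ?_
    simp
  rw [div_le_iff₀ hc]
  have h1 : ∑ i ∈ S, Real.exp (-s * x i) ≤
      ∑ i ∈ S, Real.exp (-s * m) * (Real.cosh s + (m - x i) * Real.sinh s) := by
    apply Finset.sum_le_sum
    intro i hi
    have e : -s * x i = -s * m + s * (m - x i) := by ring
    rw [e, Real.exp_add]
    gcongr
    exact exp_le_cosh s _ (hD i hi)
  refine h1.trans ?_
  rw [← Finset.mul_sum, Finset.sum_add_distrib, ← Finset.sum_mul, Finset.sum_sub_distrib, hmS]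
  simp only [Finset.sum_const, nsmul_eq_mul]
  have := Real.cosh_le_exp_half_sq s
  have e2 : Real.exp (-s * m) * (S.card * Real.cosh s + (S.card * m - m * S.card) * Real.sinh s)
    = (Real.cosh s * Real.exp (-s * m)) * S.card := by ring
  rw [e2]
  gcongr

lemma EL_exp {N : Finset V} (hN : ∀ a ∈ N, ∀ b ∈ N, ¬ G.Adj a b) {f : (V → Fin k) → ℝ}
    (hne : ∀ (X : V → Fin k) a, (av G X a).Nonempty)
    (hf : Lip N f) (s : ℝ) (l : List V) (hl : ∀ a ∈ l, a ∈ N) (X : V → Fin k) :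
    EL G l (fun X => Real.exp (-s * f X)) X ≤
      Real.exp (s ^ 2 / 2) ^ l.length * Real.exp (-s * EL G l f X) := by
  induction l generalizing X with
  | nil => simp [EL]
  | cons a l ih =>
    have hl' : ∀ b ∈ l, b ∈ N := fun b hb => hl b (List.mem_cons_of_mem _ hb)
    have haN := hl a List.mem_cons_self
    have hLip := Lip_EL hN hf l hl'
    simp only [EL]
    refine (EE_mono G a _ _ (ih hl') X).trans ?_
    rw [EE_const_mul, List.length_cons, pow_succ (Real.exp (s ^ 2 / 2)), mul_assoc]
    gcongr
    apply hoeff _ (hne X a)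
    intro i _ j _
    have := hLip (update X a j) a haN i
    rwa [update_idem] at this

/-- probability of avoiding c -/
noncomputable def pp (G : SimpleGraph V) [DecidableRel G.Adj] (c : Fin k) (w : V)
    (X : V → Fin k) : ℝ :=
  1 - (if c ∈ av G X w then 1 else 0) / ((av G X w).card : ℝ)

lemma EE_ind (hne : ∀ (X : V → Fin k) a, (av G X a).Nonempty) (c : Fin k) (a : V)
    (X : V → Fin k) :
    EE G a (fun X => if X a ≠ c then (1 : ℝ) else 0) X = pp G c a X := by
  unfold EE pp
  have hc : (0 : ℝ) < (av G X a).card := by exact_mod_cast (hne X a).card_pos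
  have : ∀ d : Fin k, (if d ≠ c then (1 : ℝ) else 0) = 1 - (if d = c then 1 else 0) := by
    intro d
    split_ifs <;> simp_all
  simp only [update_self, this, Finset.sum_sub_distrib, Finset.sum_ite_eq']
  simp only [Finset.sum_const, nsmul_eq_mul, mul_one]
  rw [sub_div, div_self hc.ne']

lemma EL_prod {N : Finset V} (hN : ∀ a ∈ N, ∀ b ∈ N, ¬ G.Adj a b)
    (hne : ∀ (X : V → Fin k) a, (av G X a).Nonempty) (c : Fin k)
    (l : List V) (hl : ∀ a ∈ l, a ∈ N) (hnd : l.Nodup) (q : (V → Fin k) → ℝ)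
    (hq : ∀ X, ∀ a ∈ l, ∀ d, q (update X a d) = q X) (X : V → Fin k) :
    EL G l (fun X => q X * (l.map fun w => if X w ≠ c then (1 : ℝ) else 0).prod) X =
      q X * (l.map fun w => pp G c w X).prod := by
  induction l generalizing X q with
  | nil => simp [EL]
  | cons a l ih =>
    have hl' : ∀ b ∈ l, b ∈ N := fun b hb => hl b (List.mem_cons_of_mem _ hb)
    have haN := hl a List.mem_cons_self
    rw [List.nodup_cons] at hnd
    have key := ih hl' hnd.2 (fun X => q X * (if X a ≠ c then (1 : ℝ) else 0)) (by
      intro Y b hb d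
      have hab : a ≠ b := by
        rintro rfl
        exact hnd.1 hb
      simp only [hq Y b (List.mem_cons_of_mem _ hb), update_of_ne hab])
    simp only [List.map_cons, List.prod_cons, EL, ← mul_assoc]
    rw [show EL G l (fun X => q X * (if X a ≠ c then (1 : ℝ) else 0) *
        (l.map fun w => if X w ≠ c then (1 : ℝ) else 0).prod) = _ from funext key]
    have e : (fun X : V → Fin k => q X * (if X a ≠ c then (1 : ℝ) else 0) *
        (l.map fun w => pp G c w X).prod) =
        fun X => (q X * (l.map fun w => pp G c w X).prod) * (if X a ≠ c then (1 : ℝ) else 0) := by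
      funext Y
      ring
    rw [e, EE_mul G a (fun X => q X * (l.map fun w => pp G c w X).prod), EE_ind hne]
    · ring
    · intro Y d
      rw [hq Y a List.mem_cons_self]
      congr 2
      apply List.map_congr_left
      intro w hw
      unfold pp
      rw [av_update G Y a w d (hN a haN w (hl' w hw))]

lemma card_av_eq (X : V → Fin k) (v : V) :
    ((av G X v).card : ℝ) = ∑ c : Fin k,
      1 * ((G.neighborFinset v).toList.map fun w => if X w ≠ c then (1 : ℝ) else 0).prod := by
  unfold av
  rw [Finset.card_filter]
  push_cast
  apply Finset.sum_congr rfl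
  intro c _
  rw [one_mul, Finset.prod_map_toList]
  rw [Finset.prod_ite_zero]
  simp

lemma Lip_card (v : V) : Lip (k := k) (G.neighborFinset v)
    (fun X => ((av G X v).card : ℝ)) := by
  have main : ∀ (X : V → Fin k) a (c : Fin k),
      (av G X v).card ≤ (av G (update X a c) v).card + 1 := by
    intro X a c
    have : av G X v ⊆ insert c (av G (update X a c) v) := by
      intro d hd
      rw [Finset.mem_insert]
      by_cases h : d = c
      · exact Or.inl h
      · right
        simp only [av, Finset.mem_filter, Finset.mem_univ, true_and] at hd ⊢
        intro w hw
        by_cases hwa : w = a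
        · subst hwa
          rw [update_self]
          exact fun h' => h h'.symm
        · rw [update_of_ne hwa]
          exact hd w hw
    exact (Finset.card_le_card this).trans (Finset.card_insert_le _ _)
  intro X a _ c
  have h1 := main X a c
  have h2 := main (update X a c) a (X a)
  rw [update_idem, update_eq_self] at h2
  rify at h1 h2
  rw [abs_le]
  constructor <;> linarith

variable (G) in
/-- proper colorings -/
def prop (k : ℕ) : Finset (V → Fin k) :=
  Finset.univ.filter fun X : V → Fin k => ∀ u v, G.Adj u v → X u ≠ X v

lemma prop_update {X : V → Fin k} (hX : X ∈ prop G k) {a : V} {c : Fin k}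
    (hc : c ∈ av G X a) : update X a c ∈ prop G k := by
  simp only [prop, av, Finset.mem_filter, Finset.mem_univ, true_and,
    SimpleGraph.mem_neighborFinset] at *
  intro u v huv
  by_cases hu : u = a
  · subst hu
    rw [update_self, update_of_ne huv.ne']
    exact (hc v huv).symm
  · by_cases hv : v = a
    · subst hv
      rw [update_self, update_of_ne hu]
      exact hc u huv.symm
    · rw [update_of_ne hu, update_of_ne hv]
      exact hX u v huv

lemma sum_EE (hne : ∀ (X : V → Fin k) a, (av G X a).Nonempty) (a : V)
    (f : (V → Fin k) → ℝ) :
    ∑ X ∈ prop G k, EE G a f X = ∑ X ∈ prop G k, f X := by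
  have h1 : ∑ X ∈ prop G k, EE G a f X =
      ∑ p ∈ (prop G k).sigma (fun X => av G X a),
        f (update p.1 a p.2) / ((av G p.1 a).card : ℝ) := by
    rw [Finset.sum_sigma]
    simp only [EE, Finset.sum_div]
  have h2 : ∑ X ∈ prop G k, f X =
      ∑ p ∈ (prop G k).sigma (fun X => av G X a), f p.1 / ((av G p.1 a).card : ℝ) := by
    rw [Finset.sum_sigma]
    apply Finset.sum_congr rfl
    intro X _
    have hc : (0 : ℝ) < (av G X a).card := by exact_mod_cast (hne X a).card_pos
    simp only [Finset.sum_const, nsmul_eq_mul]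
    field_simp
  rw [h1, h2]
  have hmem : ∀ p ∈ (prop G k).sigma (fun X => av G X a),
      (⟨update p.1 a p.2, p.1 a⟩ : Σ _ : V → Fin k, Fin k) ∈
        (prop G k).sigma (fun X => av G X a) := by
    rintro ⟨X, c⟩ h
    rw [Finset.mem_sigma] at h ⊢
    refine ⟨prop_update h.1 h.2, ?_⟩
    simp only
    rw [av_update G X a a c (G.irrefl)]
    have := h.1
    simp only [prop, av, Finset.mem_filter, Finset.mem_univ, true_and,
      SimpleGraph.mem_neighborFinset] at this ⊢
    intro w hw
    exact this w a hw.symm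
  refine Finset.sum_nbij' (fun p => ⟨update p.1 a p.2, p.1 a⟩)
    (fun p => ⟨update p.1 a p.2, p.1 a⟩) hmem hmem ?_ ?_ ?_
  · rintro ⟨X, c⟩ _
    simp
  · rintro ⟨X, c⟩ _
    simp
  · rintro ⟨X, c⟩ _
    simp only
    rw [av_update G X a a c (G.irrefl)]

lemma sum_EL (hne : ∀ (X : V → Fin k) a, (av G X a).Nonempty) (l : List V)
    (f : (V → Fin k) → ℝ) :
    ∑ X ∈ prop G k, EL G l f X = ∑ X ∈ prop G k, f X := by
  induction l with
  | nil => rfl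
  | cons a l ih =>
    simp only [EL]
    rw [sum_EE hne, ih]

/-- One-dimensional estimate. -/
lemma one_dim (β m : ℝ) (hβ0 : 0 < β) (hβ1 : β ≤ 1) (hm : 2 / β ≤ m) :
    m * (-Real.log (1 - 1 / m)) ≤ 1 - Real.log (1 - β / 2) := by
  have h2 : 2 ≤ 2 / β := by
    rw [le_div_iff₀ hβ0]
    linarith
  have hm2 : 2 ≤ m := h2.trans hm
  have hm' : 1 / m ≤ β / 2 := by
    rw [div_le_iff₀ hβ0] at hm
    rw [div_le_div_iff₀ (by linarith) (by norm_num)]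
    linarith
  have hx : 0 < 1 - β / 2 := by linarith
  have hl : Real.log (1 - β / 2) ≤ Real.log (1 - 1 / m) :=
    Real.log_le_log hx (by linarith)
  have h3 := Real.log_le_sub_one_of_pos (x := (1 - 1 / m)⁻¹) (inv_pos.2 (by linarith))
  rw [Real.log_inv] at h3
  have h4 : (1 - 1 / m)⁻¹ - 1 = 1 / (m - 1) := by
    have : m - 1 ≠ 0 := by linarith
    have : m ≠ 0 := by linarith
    have e : 1 - 1 / m = (m - 1) / m := by field_simp
    rw [e, inv_div]
    field_simp
    ring
  rw [h4, le_div_iff₀ (by linarith)] at h3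
  linarith

lemma mean_lb {Δ : ℕ} (hΔ : ∀ v, G.degree v ≤ Δ) (β : ℝ) (hβ0 : 0 < β) (hβ1 : β ≤ 1)
    (hk : (k : ℝ) ≥ (Δ : ℝ) + 2 / β) (v : V) (X : V → Fin k) :
    (k : ℝ) * (Real.exp (-(Δ : ℝ) / (k : ℝ)) - β / 2) ≤
      ∑ c : Fin k, ∏ w ∈ G.neighborFinset v, pp G c w X := by
  have h2 : 2 ≤ 2 / β := by
    rw [le_div_iff₀ hβ0]
    linarith
  have hΔ0 : (0 : ℝ) ≤ Δ := Nat.cast_nonneg _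
  have hk0 : (0 : ℝ) < k := by linarith
  have hm : ∀ w, 2 / β ≤ ((av G X w).card : ℝ) := by
    intro w
    have h1 := av_card G X w
    have h3 := hΔ w
    rify at h1 h3
    linarith
  set y : V → ℝ := fun w => -Real.log (1 - 1 / ((av G X w).card : ℝ)) with hy
  set z : Fin k → ℝ := fun c => -∑ w ∈ G.neighborFinset v, if c ∈ av G X w then y w else 0 with hz
  have hpp : ∀ c, ∏ w ∈ G.neighborFinset v, pp G c w X = Real.exp (z c) := by
    intro c
    rw [hz]
    simp only
    rw [← Finset.sum_neg_distrib, Real.exp_sum]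
    apply Finset.prod_congr rfl
    intro w _
    unfold pp
    split_ifs
    · rw [hy]
      simp only [neg_neg]
      rw [Real.exp_log]
      have : 1 / ((av G X w).card : ℝ) ≤ 1 / 2 :=
        one_div_le_one_div_of_le (by norm_num) (h2.trans (hm w))
      linarith
    · simp
  set C := 1 - Real.log (1 - β / 2) with hC
  have hlog : Real.log (1 - β / 2) ≤ 0 := Real.log_nonpos (by linarith) (by linarith)
  have hC0 : 0 ≤ C := by linarith
  have hzsum : -(Δ * C) ≤ ∑ c, z c := by
    rw [hz]
    simp only [Finset.sum_neg_distrib]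
    rw [Finset.sum_comm, neg_le_neg_iff]
    calc _ ≤ ∑ w ∈ G.neighborFinset v, C := by
          apply Finset.sum_le_sum
          intro w _
          rw [Finset.sum_ite_mem, Finset.univ_inter, Finset.sum_const, nsmul_eq_mul]
          exact one_dim β _ hβ0 hβ1 (hm w)
      _ ≤ Δ * C := by
          rw [Finset.sum_const, nsmul_eq_mul, SimpleGraph.card_neighborFinset_eq_degree]
          gcongr
          exact hΔ v
  set μ := -(Δ * C) / k with hμ
  have hμk : μ * k = -(Δ * C) := by
    rw [hμ]
    field_simp
  simp only [hpp]
  have hJ : (k : ℝ) * Real.exp μ ≤ ∑ c, Real.exp (z c) := by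
    calc (k : ℝ) * Real.exp μ ≤ ∑ c : Fin k, Real.exp μ * (1 + z c - μ) := by
          rw [← Finset.mul_sum, Finset.sum_sub_distrib, Finset.sum_add_distrib]
          simp only [Finset.sum_const, Finset.card_univ, Fintype.card_fin, nsmul_eq_mul, mul_one]
          rw [mul_comm]
          gcongr
          linarith
      _ ≤ _ := by
          apply Finset.sum_le_sum
          intro c _
          have e : z c = μ + (z c - μ) := by ring
          conv_rhs => rw [e, Real.exp_add]
          gcongr
          have := Real.add_one_le_exp (z c - μ)
          linarith
  refine le_trans ?_ hJ
  gcongr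
  have hμ2 : -(Δ : ℝ) / k + Real.log (1 - β / 2) ≤ μ := by
    have e : μ = -(Δ : ℝ) / k + (Δ / k) * Real.log (1 - β / 2) := by
      rw [hμ, hC]
      ring
    rw [e]
    have h1 : (Δ : ℝ) / k ≤ 1 := div_le_one_of_le₀ (by linarith) hk0.le
    nlinarith
  have h3 := Real.exp_le_exp.2 hμ2
  rw [Real.exp_add, Real.exp_log (by linarith)] at h3
  have h4 : Real.exp (-(Δ : ℝ) / k) ≤ 1 := by
    rw [Real.exp_le_one_iff]
    rw [neg_div]
    have : 0 ≤ (Δ : ℝ) / k := by positivity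
    linarith
  nlinarith

lemma single {Δ : ℕ} (htriangle : G.CliqueFree 3)
    (hΔ : ∀ v, G.degree v ≤ Δ) (β : ℝ) (hβ0 : 0 < β) (hβ1 : β ≤ 1)
    (hk : (k : ℝ) ≥ (Δ : ℝ) + 2 / β) (v : V) :
    (((prop G k).filter fun X => ((av G X v).card : ℝ) <
      (k : ℝ) * (Real.exp (-(Δ : ℝ) / (k : ℝ)) - β)).card : ℝ) ≤
      (prop G k).card * Real.exp (-β ^ 2 * (k : ℝ) / 8) := by
  have h2 : 2 ≤ 2 / β := by
    rw [le_div_iff₀ hβ0]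
    linarith
  have hΔ0 : (0 : ℝ) ≤ Δ := Nat.cast_nonneg _
  have hk0 : (0 : ℝ) < k := by linarith
  have hne : ∀ (X : V → Fin k) a, (av G X a).Nonempty := by
    intro X w
    have h1 := av_card G X w
    have h3 := hΔ w
    have h4 : Δ < k := by
      rify
      linarith
    rw [← Finset.card_pos]
    omega
  have hN : ∀ a ∈ G.neighborFinset v, ∀ b ∈ G.neighborFinset v, ¬ G.Adj a b := by
    intro a ha b hb hab
    rw [SimpleGraph.mem_neighborFinset] at ha hb
    exact htriangle {v, a, b} (SimpleGraph.is3Clique_triple_iff.2 ⟨ha, hb, hab⟩)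
  set T := (k : ℝ) * (Real.exp (-(Δ : ℝ) / (k : ℝ)) - β) with hT
  set f : (V → Fin k) → ℝ := fun X => ((av G X v).card : ℝ) with hf
  set l := (G.neighborFinset v).toList with hl
  have hlN : ∀ a ∈ l, a ∈ G.neighborFinset v := fun a ha => Finset.mem_toList.1 ha
  have hmean : ∀ X, T + k * β / 2 ≤ EL G l f X := by
    intro X
    have e : EL G l f X = ∑ c : Fin k, ∏ w ∈ G.neighborFinset v, pp G c w X := by
      have e1 : f = fun X => ∑ c : Fin k,
          1 * (l.map fun w => if X w ≠ c then (1 : ℝ) else 0).prod :=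
        funext fun X => card_av_eq X v
      rw [e1, EL_sum]
      apply Finset.sum_congr rfl
      intro c _
      have := EL_prod hN hne c l hlN (Finset.nodup_toList _) (fun _ => 1)
        (fun _ _ _ _ => rfl) X
      rw [this, one_mul, hl, Finset.prod_map_toList]
    rw [e]
    refine le_trans (le_of_eq ?_) (mean_lb hΔ β hβ0 hβ1 hk v X)
    rw [hT]
    ring
  set s := β / 2 with hs
  have hexp : ∀ X, EL G l (fun X => Real.exp (-s * f X)) X ≤
      Real.exp (-s * T) * Real.exp (-β ^ 2 * (k : ℝ) / 8) := by
    intro X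
    refine (EL_exp hN hne (Lip_card v) s l hlN X).trans ?_
    rw [← Real.exp_nat_mul, ← Real.exp_add, ← Real.exp_add, Real.exp_le_exp]
    have hd : (l.length : ℝ) ≤ k := by
      rw [hl, Finset.length_toList, SimpleGraph.card_neighborFinset_eq_degree]
      have h3 := hΔ v
      rify at h3
      linarith
    have h5 : s * (T + k * β / 2) ≤ s * EL G l f X :=
      mul_le_mul_of_nonneg_left (hmean X) (by positivity)
    have h6 : (l.length : ℝ) * (s ^ 2 / 2) ≤ k * (s ^ 2 / 2) := by gcongr
    have h7 : k * (s ^ 2 / 2) = β ^ 2 * k / 8 := by rw [hs]; ring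
    have h8 : s * (T + k * β / 2) = s * T + β ^ 2 * k / 4 := by rw [hs]; ring
    have h9 : -s * EL G l (fun X => ((av G X v).card : ℝ)) X = -(s * EL G l f X) := by ring
    rw [h9]
    linarith
  have hsum := Finset.sum_le_sum (s := prop G k) (fun X _ => hexp X)
  rw [sum_EL hne, Finset.sum_const, nsmul_eq_mul] at hsum
  have hlow : (((prop G k).filter fun X => f X < T).card : ℝ) * Real.exp (-s * T) ≤
      ∑ X ∈ prop G k, Real.exp (-s * f X) := by
    rw [← nsmul_eq_mul, ← Finset.sum_const]
    calc _ ≤ ∑ X ∈ (prop G k).filter (fun X => f X < T), Real.exp (-s * f X) := by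
          apply Finset.sum_le_sum
          intro X hX
          rw [Finset.mem_filter] at hX
          rw [Real.exp_le_exp]
          have : s * f X ≤ s * T := mul_le_mul_of_nonneg_left hX.2.le (by positivity)
          linarith
      _ ≤ _ := Finset.sum_le_sum_of_subset_of_nonneg (Finset.filter_subset _ _)
          (fun _ _ _ => (Real.exp_pos _).le)
  have := hlow.trans hsum
  have hpos := Real.exp_pos (-s * T)
  refine le_of_mul_le_mul_right (this.trans (le_of_eq ?_)) hpos
  ring

end LU

/-- **Local uniformity for random colorings** (Hayes–Vigoda, Lemma 2.1).
For a triangle-free graph with maximum degree `Δ`, `0 < β ≤ 1` and `k ≥ Δ + 2/β`,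
a uniformly random proper `k`-coloring `X` satisfies
`Pr(∃ v, |A(X,v)| < k(e^{-Δ/k} - β)) ≤ n e^{-β²k/8}`. -/
theorem stmt_6 {V : Type*} [Fintype V] [DecidableEq V]
    (G : SimpleGraph V) [DecidableRel G.Adj]
    (n Δ k : ℕ) (hn : Fintype.card V = n)
    (htriangle : G.CliqueFree 3)
    (hΔ : ∀ v, G.degree v ≤ Δ)
    (β : ℝ) (hβ0 : 0 < β) (hβ1 : β ≤ 1)
    (hk : (k : ℝ) ≥ (Δ : ℝ) + 2 / β)
    -- the set of proper k-colorings
    (proper : Finset (V → Fin k))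
    (hproper : proper = Finset.univ.filter fun X : V → Fin k =>
      ∀ u v, G.Adj u v → X u ≠ X v)
    -- A(X,v): the set of colors not appearing in the neighborhood of v
    (A : (V → Fin k) → V → Finset (Fin k))
    (hA : ∀ X v, A X v = Finset.univ.filter fun c => ∀ w ∈ G.neighborFinset v, X w ≠ c) :
    -- probability, under the uniform distribution on proper colorings, of the bad event
    ((proper.filter fun X => ∃ v : V,
        ((A X v).card : ℝ) < (k : ℝ) * (Real.exp (-(Δ : ℝ) / (k : ℝ)) - β)).card : ℝ)
      / (proper.card : ℝ)
      ≤ (n : ℝ) * Real.exp (-β ^ 2 * (k : ℝ) / 8) := by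
  have hA' : A = LU.av G := by
    funext X v
    exact hA X v
  have hp' : proper = LU.prop G k := hproper
  subst hA' hp' hn
  rcases Nat.eq_zero_or_pos (LU.prop G k).card with h0 | h0
  · rw [h0]
    simp only [Nat.cast_zero, div_zero]
    positivity
  have h0' : (0 : ℝ) < (LU.prop G k).card := by exact_mod_cast h0
  rw [div_le_iff₀ h0']
  have hsub : ((LU.prop G k).filter fun X => ∃ v : V,
      ((LU.av G X v).card : ℝ) < (k : ℝ) * (Real.exp (-(Δ : ℝ) / (k : ℝ)) - β)) ⊆
      Finset.univ.biUnion fun v : V => (LU.prop G k).filter fun X =>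
        ((LU.av G X v).card : ℝ) < (k : ℝ) * (Real.exp (-(Δ : ℝ) / (k : ℝ)) - β) := by
    intro X hX
    simp only [Finset.mem_filter, Finset.mem_biUnion, Finset.mem_univ, true_and] at hX ⊢
    obtain ⟨h1, v, hv⟩ := hX
    exact ⟨v, h1, hv⟩
  have h1 := (Finset.card_le_card hsub).trans Finset.card_biUnion_le
  rify at h1
  refine h1.trans ((Finset.sum_le_sum fun v _ =>
    LU.single htriangle hΔ β hβ0 hβ1 hk v).trans (le_of_eq ?_))
  rw [Finset.sum_const, Finset.card_univ, nsmul_eq_mul]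
  ring
end

section
/- Let G be a graph on n vertices with maximum degree Δ, let 0 < β < 1, and consider the Glauber dynamics on proper k-colorings of G with the Hamming metric ρ(X,Y) = |{v : X(v) ≠ Y(v)}|. Suppose the proper k-coloring X satisfies |A(X,v)| ≥ Δ/(1−β) for every vertex v. Then for every proper k-coloring Y, the pair (X,Y) is β/n distance-decreasing: there is a coupling of one step of the dynamics from X and from Y under which E[ρ(X₁,Y₁)] ≤ (1 − β/n)·ρ(X,Y). -/
/-- Maximal coupling of the uniform distributions on two nonempty finite sets. -/
lemma maximal_coupling {α : Type*} [Fintype α] [DecidableEq α] (S T : Finset α)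
    (hS : S.Nonempty) (hT : T.Nonempty) (d : ℕ)
    (hST : (S \ T).card ≤ d) (hTS : (T \ S).card ≤ d) :
    ∃ q : α → α → ℝ, (∀ a b, 0 ≤ q a b) ∧
      (∀ a, ∑ b, q a b = if a ∈ S then 1 / (S.card : ℝ) else 0) ∧
      (∀ b, ∑ a, q a b = if b ∈ T then 1 / (T.card : ℝ) else 0) ∧
      (∑ a, ∑ b, q a b * (if a ≠ b then 1 else 0) ≤ (d : ℝ) / S.card) := by
  have hs : (0 : ℝ) < S.card := by exact_mod_cast hS.card_pos
  have ht : (0 : ℝ) < T.card := by exact_mod_cast hT.card_pos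
  obtain ⟨p, hp⟩ : ∃ p : α → ℝ, p = fun a => if a ∈ S then 1 / (S.card : ℝ) else 0 := ⟨_, rfl⟩
  obtain ⟨r, hr⟩ : ∃ r : α → ℝ, r = fun a => if a ∈ T then 1 / (T.card : ℝ) else 0 := ⟨_, rfl⟩
  have hpsum : ∑ a, p a = 1 := by
    subst hp
    rw [Finset.sum_ite_mem, Finset.univ_inter, Finset.sum_const, nsmul_eq_mul]
    field_simp
  have hrsum : ∑ a, r a = 1 := by
    subst hr
    rw [Finset.sum_ite_mem, Finset.univ_inter, Finset.sum_const, nsmul_eq_mul]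
    field_simp
  have hp0 : ∀ a, 0 ≤ p a := by intro a; subst hp; dsimp only; split_ifs <;> positivity
  have hr0 : ∀ a, 0 ≤ r a := by intro a; subst hr; dsimp only; split_ifs <;> positivity
  obtain ⟨m, hm⟩ : ∃ m : α → ℝ, m = fun a => min (p a) (r a) := ⟨_, rfl⟩
  have hm0 : ∀ a, 0 ≤ m a := by intro a; subst hm; exact le_min (hp0 a) (hr0 a)
  have hmp : ∀ a, 0 ≤ p a - m a := by intro a; subst hm; simp
  have hmr : ∀ a, 0 ≤ r a - m a := by intro a; subst hm; simp
  obtain ⟨D, hD⟩ : ∃ D : ℝ, D = ∑ a, (p a - m a) := ⟨_, rfl⟩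
  have hD' : D = ∑ a, (r a - m a) := by
    rw [hD, Finset.sum_sub_distrib, Finset.sum_sub_distrib, hpsum, hrsum]
  have hD0 : 0 ≤ D := hD ▸ Finset.sum_nonneg fun a _ => hmp a
  have hDle : D ≤ (d : ℝ) / S.card := by
    rcases le_total (S.card : ℝ) T.card with h | h
    · -- then min = r on intersection; D = |T \ S| / |T|
      have : D ≤ ∑ a, if a ∈ T \ S then 1 / (T.card : ℝ) else 0 := by
        rw [hD']
        refine Finset.sum_le_sum fun a _ => ?_
        have h1 : 1 / (T.card : ℝ) ≤ 1 / (S.card : ℝ) := one_div_le_one_div_of_le hs h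
        have h2 : 0 < 1 / (T.card : ℝ) := by positivity
        subst hm hp hr
        by_cases ha : a ∈ S <;> by_cases hb : a ∈ T <;> simp_all
      rw [Finset.sum_ite_mem, Finset.univ_inter, Finset.sum_const, nsmul_eq_mul] at this
      refine this.trans ?_
      rw [mul_one_div]
      have : ((T \ S).card : ℝ) ≤ d := by exact_mod_cast hTS
      gcongr
    · have : D ≤ ∑ a, if a ∈ S \ T then 1 / (S.card : ℝ) else 0 := by
        rw [hD]
        refine Finset.sum_le_sum fun a _ => ?_
        have h1 : 1 / (S.card : ℝ) ≤ 1 / (T.card : ℝ) := one_div_le_one_div_of_le ht h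
        have h2 : 0 < 1 / (S.card : ℝ) := by positivity
        subst hm hp hr
        by_cases ha : a ∈ S <;> by_cases hb : a ∈ T <;> simp_all
      rw [Finset.sum_ite_mem, Finset.univ_inter, Finset.sum_const, nsmul_eq_mul] at this
      refine this.trans ?_
      rw [mul_one_div]
      have : ((S \ T).card : ℝ) ≤ d := by exact_mod_cast hST
      gcongr
  have key1 : ∀ a, (p a - m a) * D / D = p a - m a := by
    intro a
    by_cases h : D = 0
    · have := (Finset.sum_eq_zero_iff_of_nonneg (fun a _ => hmp a)).1 (hD.symm.trans h) a
        (Finset.mem_univ a)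
      rw [this]; simp
    · field_simp
  have key2 : ∀ a, D * (r a - m a) / D = r a - m a := by
    intro a
    by_cases h : D = 0
    · have := (Finset.sum_eq_zero_iff_of_nonneg (fun a _ => hmr a)).1 (hD'.symm.trans h) a
        (Finset.mem_univ a)
      rw [this]; simp
    · field_simp
  have hrow : ∀ a, ∑ b, (p a - m a) * (r b - m b) / D = p a - m a := by
    intro a
    rw [← Finset.sum_div, ← Finset.mul_sum, ← hD', key1]
  have hcol : ∀ b, ∑ a, (p a - m a) * (r b - m b) / D = r b - m b := by
    intro b
    rw [← Finset.sum_div, ← Finset.sum_mul, ← hD, key2]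
  refine ⟨fun a b => (if a = b then m a else 0) + (p a - m a) * (r b - m b) / D, ?_, ?_, ?_, ?_⟩
  · intro a b
    have := div_nonneg (mul_nonneg (hmp a) (hmr b)) hD0
    have := hm0 a
    dsimp only
    split_ifs <;> linarith
  · intro a
    rw [Finset.sum_add_distrib, hrow, Finset.sum_ite_eq]
    simp [hp]
  · intro b
    rw [Finset.sum_add_distrib, hcol, Finset.sum_ite_eq']
    simp [hr]
  · refine le_trans ?_ hDle
    have : D = ∑ a, ∑ b, (p a - m a) * (r b - m b) / D := by
      rw [Finset.sum_congr rfl fun a _ => hrow a, ← hD]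
    conv_rhs => rw [this]
    refine Finset.sum_le_sum fun a _ => Finset.sum_le_sum fun b _ => ?_
    have := div_nonneg (mul_nonneg (hmp a) (hmr b)) hD0
    by_cases h : a = b <;> simp [h] 
    subst h; exact this

/-- Colors available in `Y` but not in `X` inject into the disagreeing neighbors. -/
lemma card_avail_sdiff_le {V : Type*} [Fintype V] [DecidableEq V]
    (G : SimpleGraph V) [DecidableRel G.Adj] (k : ℕ) (X Y : V → Fin k) (v : V) :
    ((Finset.univ.filter fun c => ∀ w ∈ G.neighborFinset v, X w ≠ c) \
      (Finset.univ.filter fun c => ∀ w ∈ G.neighborFinset v, Y w ≠ c)).card ≤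
      ((G.neighborFinset v).filter fun w => X w ≠ Y w).card := by
  refine le_trans (Finset.card_le_card ?_) (Finset.card_image_le (f := Y))
  intro c hc
  simp only [Finset.mem_sdiff, Finset.mem_filter, Finset.mem_univ, true_and, not_forall,
    not_not, exists_prop] at hc
  obtain ⟨h1, w, hw, h2⟩ := hc
  rw [Finset.mem_image]
  exact ⟨w, Finset.mem_filter.2 ⟨hw, fun h => h1 w hw (h.trans h2)⟩, h2⟩

lemma sum_disagree_le {V : Type*} [Fintype V] [DecidableEq V]
    (G : SimpleGraph V) [DecidableRel G.Adj] (Δ k : ℕ) (hΔ : ∀ v, G.degree v ≤ Δ)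
    (X Y : V → Fin k) :
    ∑ v, ((G.neighborFinset v).filter fun w => X w ≠ Y w).card ≤
      Δ * (Finset.univ.filter fun v => X v ≠ Y v).card := by
  have h1 : ∀ v, ((G.neighborFinset v).filter fun w => X w ≠ Y w).card =
      ∑ w ∈ Finset.univ.filter (fun v => X v ≠ Y v), if G.Adj w v then 1 else 0 := by
    intro v
    rw [← Finset.card_filter, Finset.filter_filter]
    congr 1
    ext w
    simp [G.adj_comm, and_comm]
  rw [Finset.sum_congr rfl fun v _ => h1 v, Finset.sum_comm, mul_comm, ← smul_eq_mul]
  refine Finset.sum_le_card_nsmul _ _ _ fun w _ => ?_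
  rw [← Finset.card_filter, ← G.neighborFinset_eq_filter]
  exact hΔ w

lemma hamming_update {V : Type*} [Fintype V] [DecidableEq V] {k : ℕ} (X Y : V → Fin k)
    (v : V) (c d : Fin k) :
    ((Finset.univ.filter fun u => Function.update X v c u ≠ Function.update Y v d u).card : ℝ) =
      (Finset.univ.filter fun u => X u ≠ Y u).card - (if X v ≠ Y v then 1 else 0)
        + (if c ≠ d then 1 else 0) := by
  simp only [Finset.card_filter, Nat.cast_sum, Nat.cast_ite, Nat.cast_one, Nat.cast_zero]
  rw [← Finset.add_sum_erase _ _ (Finset.mem_univ v),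
    ← Finset.add_sum_erase _ (fun u => if X u ≠ Y u then (1:ℝ) else 0) (Finset.mem_univ v)]
  have : ∑ x ∈ Finset.univ.erase v,
      (if Function.update X v c x ≠ Function.update Y v d x then (1:ℝ) else 0) =
      ∑ x ∈ Finset.univ.erase v, (if X x ≠ Y x then (1:ℝ) else 0) := by
    refine Finset.sum_congr rfl fun u hu => ?_
    rw [Function.update_of_ne (Finset.ne_of_mem_erase hu),
      Function.update_of_ne (Finset.ne_of_mem_erase hu)]
  rw [this]
  simp only [Function.update_self]
  ring

lemma sum_update_indicator {V : Type*} [Fintype V] [DecidableEq V] {k : ℕ} (X a : V → Fin k)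
    (v : V) (S : Finset (Fin k)) (t : ℝ) :
    ∑ c, (if c ∈ S then t else 0) * (if a = Function.update X v c then 1 else 0) =
      if (∀ w, w ≠ v → a w = X w) ∧ a v ∈ S then t else 0 := by
  have h : ∀ c, a = Function.update X v c ↔ (c = a v ∧ ∀ w, w ≠ v → a w = X w) := by
    intro c
    rw [Function.eq_update_iff]
    tauto
  simp only [h]
  rw [Finset.sum_eq_single (a v)]
  · by_cases h1 : ∀ w, w ≠ v → a w = X w <;> by_cases h2 : a v ∈ S <;> simp [h1, h2]
  · intro b _ hb
    simp [hb]
  · simp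


/-- **Most colorings are distance-decreasing** (Hayes–Vigoda, Lemma 2.3).
If the proper `k`-coloring `X` satisfies `|A(X,v)| ≥ Δ/(1-β)` for every vertex `v`,
then for every proper `k`-coloring `Y` there is a coupling of one step of the Glauber
dynamics from `X` and from `Y` under which the expected Hamming distance is at most
`(1 - β/n)·ρ(X,Y)`. -/
theorem stmt_7 {V : Type*} [Fintype V] [DecidableEq V]
    (G : SimpleGraph V) [DecidableRel G.Adj]
    (n Δ k : ℕ) (hn : Fintype.card V = n)
    (hΔ : ∀ v, G.degree v ≤ Δ)
    (β : ℝ) (hβ0 : 0 < β) (hβ1 : β < 1)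
    -- A(X,v): the set of colors not appearing in the neighborhood of v
    (A : (V → Fin k) → V → Finset (Fin k))
    (hA : ∀ X v, A X v = Finset.univ.filter fun c => ∀ w ∈ G.neighborFinset v, X w ≠ c)
    -- the Glauber transition kernel: pick v uniformly, recolor it uniformly from A(X,v)
    (P : (V → Fin k) → (V → Fin k) → ℝ)
    (hP : ∀ X Y, P X Y = (1 / (n : ℝ)) * ∑ v : V,
      if (∀ w, w ≠ v → Y w = X w) ∧ Y v ∈ A X v
      then 1 / ((A X v).card : ℝ) else 0)
    -- the Hamming metric
    (ρ : (V → Fin k) → (V → Fin k) → ℕ)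
    (hρ : ∀ X Y, ρ X Y = (Finset.univ.filter fun v => X v ≠ Y v).card)
    -- the pair of proper colorings
    (X Y : V → Fin k)
    (hX : ∀ u v, G.Adj u v → X u ≠ X v)
    (hY : ∀ u v, G.Adj u v → Y u ≠ Y v)
    (havail : ∀ v : V, ((A X v).card : ℝ) ≥ (Δ : ℝ) / (1 - β)) :
    ∃ ν : (V → Fin k) → (V → Fin k) → ℝ,
      (∀ a b, 0 ≤ ν a b) ∧
      (∀ a, ∑ b, ν a b = P X a) ∧
      (∀ b, ∑ a, ν a b = P Y b) ∧
      (∑ a, ∑ b, ν a b * (ρ a b : ℝ)) ≤ (1 - β / (n : ℝ)) * (ρ X Y : ℝ) := by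
  have hne : ∀ Z : V → Fin k, (∀ u v, G.Adj u v → Z u ≠ Z v) → ∀ v, (A Z v).Nonempty := by
    intro Z hZ v
    refine ⟨Z v, ?_⟩
    rw [hA]
    simp only [Finset.mem_filter, Finset.mem_univ, true_and, SimpleGraph.mem_neighborFinset]
    intro w hw
    exact hZ _ _ hw.symm
  obtain ⟨d, hd⟩ : ∃ d : V → ℕ, d = fun v =>
    ((G.neighborFinset v).filter fun w => X w ≠ Y w).card := ⟨_, rfl⟩
  have hq := fun v => maximal_coupling (A X v) (A Y v) (hne X hX v) (hne Y hY v) (d v)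
    (by rw [hA, hA, hd]; exact card_avail_sdiff_le G k X Y v)
    (by
      rw [hA, hA, hd]
      have := card_avail_sdiff_le G k Y X v
      simpa only [ne_comm (a := Y _) (b := X _)] using this)
  choose q hq0 hq1 hq2 hq3 using hq
  have hd_le : ∀ v, (d v : ℝ) / (A X v).card * Δ ≤ d v * (1 - β) := by
    intro v
    have h1 : (0:ℝ) < (A X v).card := by exact_mod_cast (hne X hX v).card_pos
    have h2 := havail v
    rw [ge_iff_le, div_le_iff₀ (by linarith)] at h2
    rw [div_mul_eq_mul_div, div_le_iff₀ h1]
    have : (0:ℝ) ≤ d v := by positivity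
    nlinarith
  have hsum : ∑ v, (d v : ℝ) / (A X v).card ≤ (1 - β) * ρ X Y := by
    have h1 : ∑ v, (d v : ℝ) ≤ Δ * ρ X Y := by
      have := sum_disagree_le G Δ k hΔ X Y
      rw [hρ, hd]
      exact_mod_cast this
    rcases Nat.eq_zero_or_pos Δ with h0 | h0
    · have hz : ∀ v, d v = 0 := by
        intro v
        have : d v ≤ G.degree v := by rw [hd]; exact Finset.card_filter_le _ _
        have := hΔ v
        omega
      simp only [hz, Nat.cast_zero, zero_div, Finset.sum_const_zero]
      have : (0:ℝ) ≤ ρ X Y := by positivity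
      nlinarith
    · have hΔ0 : (0:ℝ) < Δ := by exact_mod_cast h0
      have h2 : (∑ v, (d v : ℝ) / (A X v).card) * Δ ≤ (∑ v, (d v : ℝ)) * (1 - β) := by
        rw [Finset.sum_mul, Finset.sum_mul]
        exact Finset.sum_le_sum fun v _ => hd_le v
      refine le_of_mul_le_mul_right ?_ hΔ0
      nlinarith
  have hqtot : ∀ v, ∑ c, ∑ e, q v c e = 1 := by
    intro v
    have h1 : (0:ℝ) < (A X v).card := by exact_mod_cast (hne X hX v).card_pos
    rw [Finset.sum_congr rfl fun c _ => hq1 v c, Finset.sum_ite_mem, Finset.univ_inter,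
      Finset.sum_const, nsmul_eq_mul]
    field_simp
  refine ⟨fun a b => (1 / (n : ℝ)) * ∑ v, ∑ c, ∑ e, q v c e *
    (if a = Function.update X v c then 1 else 0) *
    (if b = Function.update Y v e then 1 else 0), ?_, ?_, ?_, ?_⟩
  · intro a b
    refine mul_nonneg (by positivity) (Finset.sum_nonneg fun v _ => Finset.sum_nonneg fun c _ =>
      Finset.sum_nonneg fun e _ => ?_)
    have := hq0 v c e
    split_ifs <;> simp [this]
  · intro a
    rw [hP, ← Finset.mul_sum]
    congr 1
    rw [Finset.sum_comm]
    refine Finset.sum_congr rfl fun v _ => ?_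
    rw [← sum_update_indicator, Finset.sum_comm]
    refine Finset.sum_congr rfl fun c _ => ?_
    rw [← hq1, Finset.sum_mul, Finset.sum_comm]
    refine Finset.sum_congr rfl fun e _ => ?_
    rw [← Finset.mul_sum, Finset.sum_ite_eq']
    simp
  · intro b
    rw [hP, ← Finset.mul_sum]
    congr 1
    rw [Finset.sum_comm]
    refine Finset.sum_congr rfl fun v _ => ?_
    rw [← sum_update_indicator]
    rw [Finset.sum_congr rfl fun a _ => Finset.sum_comm, Finset.sum_comm]
    refine Finset.sum_congr rfl fun e _ => ?_
    rw [← hq2, Finset.sum_mul, Finset.sum_comm]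
    refine Finset.sum_congr rfl fun c _ => ?_
    rw [← Finset.sum_mul, ← Finset.mul_sum, Finset.sum_ite_eq']
    simp
  · have hswap : ∑ a, ∑ b, ((1 / (n : ℝ)) * ∑ v, ∑ c, ∑ e, q v c e *
        (if a = Function.update X v c then 1 else 0) *
        (if b = Function.update Y v e then 1 else 0)) * (ρ a b : ℝ) =
        (1 / (n : ℝ)) * ∑ v, ∑ c, ∑ e, q v c e *
          (ρ (Function.update X v c) (Function.update Y v e) : ℝ) := by
      simp only [mul_assoc, ← Finset.mul_sum, Finset.sum_mul]
      congr 1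
      rw [Finset.sum_congr rfl fun a _ => Finset.sum_comm, Finset.sum_comm]
      refine Finset.sum_congr rfl fun v _ => ?_
      rw [Finset.sum_congr rfl fun a _ => Finset.sum_comm, Finset.sum_comm]
      refine Finset.sum_congr rfl fun c _ => ?_
      rw [Finset.sum_congr rfl fun a _ => Finset.sum_comm, Finset.sum_comm]
      refine Finset.sum_congr rfl fun e _ => ?_
      simp only [← Finset.mul_sum]
      congr 1
      simp
    rw [hswap]
    have hv : ∀ v, ∑ c, ∑ e, q v c e *
          (ρ (Function.update X v c) (Function.update Y v e) : ℝ) ≤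
        ρ X Y - (if X v ≠ Y v then 1 else 0) + (d v : ℝ) / (A X v).card := by
      intro v
      have : ∑ c, ∑ e, q v c e *
          (ρ (Function.update X v c) (Function.update Y v e) : ℝ) =
          (∑ c, ∑ e, q v c e) * (ρ X Y - (if X v ≠ Y v then 1 else 0)) +
          ∑ c, ∑ e, q v c e * (if c ≠ e then 1 else 0) := by
        rw [Finset.sum_mul, ← Finset.sum_add_distrib]
        refine Finset.sum_congr rfl fun c _ => ?_
        rw [Finset.sum_mul, ← Finset.sum_add_distrib]
        refine Finset.sum_congr rfl fun e _ => ?_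
        rw [hρ, hρ, hamming_update]
        ring
      rw [this, hqtot, one_mul]
      have := hq3 v
      linarith
    have htot := Finset.sum_le_sum fun v (_ : v ∈ Finset.univ) => hv v
    rw [Finset.sum_add_distrib, Finset.sum_sub_distrib] at htot
    have hdis : ∑ v, (if X v ≠ Y v then (1:ℝ) else 0) = ρ X Y := by
      rw [hρ, Finset.card_filter]; push_cast; rfl
    rw [hdis, Finset.sum_const, nsmul_eq_mul, Finset.card_univ, hn] at htot
    rcases Nat.eq_zero_or_pos n with h0 | h0
    · subst h0
      simp
    · have hn0 : (0:ℝ) < n := by exact_mod_cast h0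
      rw [one_div, inv_mul_le_iff₀ hn0]
      have : (n:ℝ) * ((1 - β / n) * ρ X Y) = (n - β) * ρ X Y := by field_simp
      rw [this]
      linarith
end

section
/- Let G be a graph on n vertices, let λ > 0, and consider the Glauber dynamics for the hard-core model on G at fugacity λ, with the Hamming metric ρ(X,Y) = |{v : v ∈ X Δ Y}| on independent sets. Let X and Y be independent sets of G and suppose there exists ζ > 0 such that for every vertex v, |U(X,v)| ≤ (1−ζ)(1+λ)/λ and |U(Y,v)| ≤ (1−ζ)(1+λ)/λ. Then the pair (X,Y) is ζ/n distance-decreasing: there is a coupling of one step of the dynamics from X and from Y under which E[ρ(X₁,Y₁)] ≤ (1 − ζ/n)·ρ(X,Y). -/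
lemma hc_step {V : Type*} [Fintype V] [DecidableEq V]
    (G : SimpleGraph V) [DecidableRel G.Adj] (X Y : Finset V)
    (hX : ∀ u ∈ X, ∀ v ∈ X, ¬ G.Adj u v)
    (hY : ∀ u ∈ Y, ∀ v ∈ Y, ¬ G.Adj u v)
    (U : Finset V → V → Finset V)
    (hU : ∀ (X : Finset V) (v : V), U X v = (G.neighborFinset v).filter
      fun w => ∀ u ∈ (G.neighborFinset w).erase v, u ∉ X)
    (F : Finset V → V → Finset V)
    (hF : ∀ X v, F X v = (if ∀ u ∈ insert v X, ∀ w ∈ insert v X, ¬ G.Adj u w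
                 then insert v X else X)) (v : V) :
    ((F X v \ F Y v) ∪ (F Y v \ F X v)).card ≤
      (((X \ Y) ∪ (Y \ X)).erase v).card
        + (((Y \ X).filter fun w => v ∈ U X w).card
          + ((X \ Y).filter fun w => v ∈ U Y w).card) := by
  have key : ∀ Z : Finset V, (∀ u ∈ Z, ∀ v ∈ Z, ¬ G.Adj u v) →
      ((∀ u ∈ insert v Z, ∀ w ∈ insert v Z, ¬ G.Adj u w) ↔ ∀ u ∈ Z, ¬ G.Adj v u) := by
    intro Z hZ
    constructor
    · intro h u hu
      exact h v (Finset.mem_insert_self _ _) u (Finset.mem_insert_of_mem hu)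
    · intro h u hu w hw
      rcases Finset.mem_insert.1 hu with rfl | hu <;> rcases Finset.mem_insert.1 hw with rfl | hw
      · exact G.irrefl
      · exact h w hw
      · exact fun hh => h u (by assumption) hh.symm
      · exact hZ u hu w hw
  have hsub : ((F X v \ F Y v) ∪ (F Y v \ F X v)) ⊆
      insert v (((X \ Y) ∪ (Y \ X)).erase v) := by
    intro u hu
    simp only [hF] at hu
    split_ifs at hu <;> grind
  have bigc : 1 ≤ (((Y \ X).filter fun w => v ∈ U X w).card
          + ((X \ Y).filter fun w => v ∈ U Y w).card) → ((F X v \ F Y v) ∪ (F Y v \ F X v)).card ≤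
      (((X \ Y) ∪ (Y \ X)).erase v).card
        + (((Y \ X).filter fun w => v ∈ U X w).card
          + ((X \ Y).filter fun w => v ∈ U Y w).card) := by
    intro h
    have h1 := Finset.card_le_card hsub
    have h2 := Finset.card_insert_le v (((X \ Y) ∪ (Y \ X)).erase v)
    omega
  by_cases a : ∀ u ∈ X, ¬ G.Adj v u <;> by_cases b : ∀ u ∈ Y, ¬ G.Adj v u
  · refine le_trans (Finset.card_le_card ?_) (Nat.le_add_right _ _)
    rw [hF, hF, if_pos ((key X hX).2 a), if_pos ((key Y hY).2 b)]
    intro u hu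
    grind
  · apply bigc
    push Not at b
    obtain ⟨w, hw, hvw⟩ := b
    have : 0 < ((Y \ X).filter fun w => v ∈ U X w).card := by
      apply Finset.card_pos.2
      refine ⟨w, ?_⟩
      simp only [Finset.mem_filter, Finset.mem_sdiff, hU, SimpleGraph.mem_neighborFinset,
        Finset.mem_erase]
      exact ⟨⟨hw, fun h => a w h hvw⟩, hvw.symm, fun u hu h => a u h hu.2⟩
    omega
  · apply bigc
    push Not at a
    obtain ⟨w, hw, hvw⟩ := a
    have : 0 < ((X \ Y).filter fun w => v ∈ U Y w).card := by
      apply Finset.card_pos.2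
      refine ⟨w, ?_⟩
      simp only [Finset.mem_filter, Finset.mem_sdiff, hU, SimpleGraph.mem_neighborFinset,
        Finset.mem_erase]
      exact ⟨⟨hw, fun h => b w h hvw⟩, hvw.symm, fun u hu h => b u h hu.2⟩
    omega
  · refine le_trans (Finset.card_le_card ?_) (Nat.le_add_right _ _)
    rw [hF, hF, if_neg (fun h => a ((key X hX).1 h)), if_neg (fun h => b ((key Y hY).1 h))]
    have hvX : v ∉ X := fun h => a (fun u hu => hX v h u hu)
    have hvY : v ∉ Y := fun h => b (fun u hu => hY v h u hu)
    intro u hu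
    grind

lemma hc_count {V : Type*} [Fintype V] [DecidableEq V] (A : Finset V) (W : V → Finset V) :
    ∑ v : V, (A.filter fun w => v ∈ W w).card = ∑ w ∈ A, (W w).card := by
  simp only [Finset.card_filter]
  rw [Finset.sum_comm]
  refine Finset.sum_congr rfl fun w _ => ?_
  rw [← Finset.card_filter]
  congr 1
  ext v
  simp


/-- **Contraction for the hard-core Glauber dynamics** (Hayes–Vigoda, Lemma 4.8).
If independent sets `X`, `Y` satisfy `|U(X,v)|, |U(Y,v)| ≤ (1-ζ)(1+λ)/λ` for all `v`,
then there is a coupling of one step of the hard-core Glauber dynamics from `X` and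
from `Y` under which the expected Hamming distance is at most `(1 - ζ/n)·ρ(X,Y)`. -/
theorem stmt_9 {V : Type*} [Fintype V] [DecidableEq V]
    (G : SimpleGraph V) [DecidableRel G.Adj]
    (n : ℕ) (hn : Fintype.card V = n)
    (lam : ℝ) (hlam : 0 < lam)
    -- U(X,v): the neighbors of v unblocked in X \ {v}
    (U : Finset V → V → Finset V)
    (hU : ∀ (X : Finset V) (v : V), U X v = (G.neighborFinset v).filter
      fun w => ∀ u ∈ (G.neighborFinset w).erase v, u ∉ X)
    -- the Glauber transition kernel for the hard-core model at fugacity lam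
    (P : Finset V → Finset V → ℝ)
    (hP : ∀ X Y : Finset V, P X Y = (1 / (n : ℝ)) * ∑ v : V,
      ((lam / (1 + lam)) *
        (if Y = (if ∀ u ∈ insert v X, ∀ w ∈ insert v X, ¬ G.Adj u w
                 then insert v X else X) then 1 else 0)
       + (1 / (1 + lam)) * (if Y = X.erase v then 1 else 0)))
    -- the Hamming metric (size of the symmetric difference)
    (ρ : Finset V → Finset V → ℕ)
    (hρ : ∀ X Y : Finset V, ρ X Y = ((X \ Y) ∪ (Y \ X)).card)
    -- the pair of independent sets
    (X Y : Finset V)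
    (hX : ∀ u ∈ X, ∀ v ∈ X, ¬ G.Adj u v)
    (hY : ∀ u ∈ Y, ∀ v ∈ Y, ¬ G.Adj u v)
    (ζ : ℝ) (hζ : 0 < ζ)
    (hUX : ∀ v : V, ((U X v).card : ℝ) ≤ (1 - ζ) * (1 + lam) / lam)
    (hUY : ∀ v : V, ((U Y v).card : ℝ) ≤ (1 - ζ) * (1 + lam) / lam) :
    ∃ ν : Finset V → Finset V → ℝ,
      (∀ a b, 0 ≤ ν a b) ∧
      (∀ a, ∑ b, ν a b = P X a) ∧
      (∀ b, ∑ a, ν a b = P Y b) ∧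
      (∑ a, ∑ b, ν a b * (ρ a b : ℝ)) ≤ (1 - ζ / (n : ℝ)) * (ρ X Y : ℝ) := by
  obtain ⟨F, hF⟩ : ∃ F : Finset V → V → Finset V, ∀ X v, F X v =
      (if ∀ u ∈ insert v X, ∀ w ∈ insert v X, ¬ G.Adj u w then insert v X else X) :=
    ⟨_, fun _ _ => rfl⟩
  simp only [← hF] at hP
  have hl : 0 < 1 + lam := by linarith
  obtain ⟨p, hp⟩ : ∃ p, p = lam / (1 + lam) := ⟨_, rfl⟩
  obtain ⟨q, hq⟩ : ∃ q, q = 1 / (1 + lam) := ⟨_, rfl⟩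
  have hp0 : 0 ≤ p := by rw [hp]; positivity
  have hq0 : 0 ≤ q := by rw [hq]; positivity
  have hpq : p + q = 1 := by rw [hp, hq]; field_simp; ring
  simp only [← hp, ← hq] at hP
  refine ⟨fun a b => (1 / (n : ℝ)) * ∑ v : V,
    (p * ((if a = F X v then 1 else 0) * (if b = F Y v then 1 else 0))
      + q * ((if a = X.erase v then 1 else 0) * (if b = Y.erase v then 1 else 0))),
    ?_, ?_, ?_, ?_⟩
  · intro a b
    refine mul_nonneg (by positivity) (Finset.sum_nonneg fun v _ => ?_)
    refine add_nonneg (mul_nonneg hp0 ?_) (mul_nonneg hq0 ?_) <;> split_ifs <;> simp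
  · intro a
    rw [hP, ← Finset.mul_sum, Finset.sum_comm]
    congr 1
    refine Finset.sum_congr rfl fun v _ => ?_
    rw [Finset.sum_add_distrib, ← Finset.mul_sum, ← Finset.mul_sum, ← Finset.mul_sum,
      ← Finset.mul_sum]
    simp
  · intro b
    rw [hP, ← Finset.mul_sum, Finset.sum_comm]
    congr 1
    refine Finset.sum_congr rfl fun v _ => ?_
    rw [Finset.sum_add_distrib, ← Finset.mul_sum, ← Finset.mul_sum, ← Finset.sum_mul,
      ← Finset.sum_mul]
    simp
  have hE : (∑ a, ∑ b, ((1 / (n : ℝ)) * ∑ v : V,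
    (p * ((if a = F X v then 1 else 0) * (if b = F Y v then 1 else 0))
      + q * ((if a = X.erase v then 1 else 0) * (if b = Y.erase v then 1 else 0)))) * (ρ a b : ℝ))
      = (1 / (n : ℝ)) * ∑ v : V, (p * ρ (F X v) (F Y v) + q * ρ (X.erase v) (Y.erase v)) := by
    have dd : ∀ A B : Finset V, ∑ a : Finset V, ∑ b : Finset V,
        (((if a = A then (1 : ℝ) else 0) * (if b = B then 1 else 0)) * (ρ a b : ℝ)) = ρ A B := by
      intro A B
      simp [mul_assoc, ← Finset.mul_sum]
    simp only [← dd (F X _) (F Y _), ← dd (X.erase _) (Y.erase _)]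
    simp only [Finset.mul_sum, Finset.sum_mul, ← Finset.sum_add_distrib]
    conv_rhs => rw [Finset.sum_comm]
    refine Finset.sum_congr rfl fun a _ => ?_
    conv_rhs => rw [Finset.sum_comm]
    refine Finset.sum_congr rfl fun b _ => Finset.sum_congr rfl fun v _ => ?_
    ring
  refine hE.le.trans ?_
  obtain ⟨D, hD⟩ : ∃ D, D = (X \ Y) ∪ (Y \ X) := ⟨_, rfl⟩
  have hDc : (D.card : ℝ) = (Y \ X).card + (X \ Y).card := by
    rw [hD, Finset.card_union_of_disjoint disjoint_sdiff_sdiff]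
    push_cast; ring
  rcases Nat.eq_zero_or_pos n with h0 | hnpos
  · have : IsEmpty V := Fintype.card_eq_zero_iff.1 (hn.trans h0)
    have hz : ρ X Y = 0 := by
      rw [hρ]; simp [Finset.eq_empty_of_isEmpty]
    simp [h0, hz]
  have hn0 : (0 : ℝ) < n := by exact_mod_cast hnpos
  have hers : ∀ v, ((D.erase v).card : ℝ) = D.card - (if v ∈ D then 1 else 0) := by
    intro v
    split_ifs with h
    · rw [Finset.card_erase_of_mem h, Nat.cast_sub (Finset.card_pos.2 ⟨v, h⟩)]; simp
    · rw [Finset.erase_eq_of_notMem h]; simp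
  have hsumers : ∑ v : V, ((D.erase v).card : ℝ) = n * D.card - D.card := by
    simp only [hers, Finset.sum_sub_distrib]
    simp [hn]
  have hb : ∀ v : V, p * ρ (F X v) (F Y v) + q * ρ (X.erase v) (Y.erase v) ≤
      ((D.erase v).card : ℝ) + p * ((((Y \ X).filter fun w => v ∈ U X w).card : ℝ)
          + (((X \ Y).filter fun w => v ∈ U Y w).card : ℝ)) := by
    intro v
    have h1 : (ρ (F X v) (F Y v) : ℝ) ≤ ((D.erase v).card : ℝ) +
        ((((Y \ X).filter fun w => v ∈ U X w).card : ℝ)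
          + (((X \ Y).filter fun w => v ∈ U Y w).card : ℝ)) := by
      rw [hρ, hD]
      exact_mod_cast hc_step G X Y hX hY U hU F hF v
    have h2 : ρ (X.erase v) (Y.erase v) = (D.erase v).card := by
      rw [hρ, hD]
      congr 1
      ext u
      grind
    rw [h2]
    have h3 := mul_le_mul_of_nonneg_left h1 hp0
    have h4 : q = 1 - p := by linarith
    rw [h4]
    linarith
  have hc1 : ∑ v : V, (((Y \ X).filter fun w => v ∈ U X w).card : ℝ)
      ≤ (Y \ X).card * ((1 - ζ) * (1 + lam) / lam) := by
    have := hc_count (Y \ X) (U X)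
    rw [← Nat.cast_sum, this, Nat.cast_sum]
    simpa using Finset.sum_le_card_nsmul (Y \ X) (fun w => ((U X w).card : ℝ)) _
      (fun w _ => hUX w)
  have hc2 : ∑ v : V, (((X \ Y).filter fun w => v ∈ U Y w).card : ℝ)
      ≤ (X \ Y).card * ((1 - ζ) * (1 + lam) / lam) := by
    have := hc_count (X \ Y) (U Y)
    rw [← Nat.cast_sum, this, Nat.cast_sum]
    simpa using Finset.sum_le_card_nsmul (X \ Y) (fun w => ((U Y w).card : ℝ)) _
      (fun w _ => hUY w)
  have hpK : p * ((1 - ζ) * (1 + lam) / lam) = 1 - ζ := by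
    rw [hp]; field_simp
  have htot := Finset.sum_le_sum fun v (_ : v ∈ (Finset.univ : Finset V)) => hb v
  rw [Finset.sum_add_distrib (f := fun v => ((D.erase v).card : ℝ)), hsumers, ← Finset.mul_sum,
    Finset.sum_add_distrib (f := fun v => (((Y \ X).filter fun w => v ∈ U X w).card : ℝ))] at htot
  have hfin := mul_le_mul_of_nonneg_left (add_le_add hc1 hc2) hp0
  have h5 : p * ((Y \ X).card * ((1 - ζ) * (1 + lam) / lam)
      + (X \ Y).card * ((1 - ζ) * (1 + lam) / lam)) = (1 - ζ) * D.card := by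
    rw [hDc]; linear_combination (((Y \ X).card : ℝ) + (X \ Y).card) * hpK
  rw [h5] at hfin
  rw [hρ X Y, ← hD]
  calc _ ≤ (1 / (n : ℝ)) * ((n - ζ) * D.card) := by
        refine mul_le_mul_of_nonneg_left ?_ (by positivity)
        linarith
    _ = _ := by field_simp
end

section
/- Let ζ > 0 and 1 ≤ C ≤ (1−ζ)e, and let ξ > 0. Let g(x) = exp(−Cx), let μ be the unique fixed point of g, and set θ = ξζ/(8C). Define h on closed intervals by h(I) = {g(x) + y : x ∈ I, |y| ≤ θ}, and let t = ⌈(4/ζ)·ln(1 + 1/ξ)⌉. Then h^t([0,1]) ⊆ [μ − ξ, μ + ξ], where h^t denotes the t-fold iterate of h. -/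
theorem aux_contr (ζ C : ℝ) (hC1 : 1 ≤ C) (hC2 : C ≤ (1 - ζ) * Real.exp 1) (x y : ℝ) :
    |Real.exp (-(C * Real.exp (-(C * x)))) - Real.exp (-(C * Real.exp (-(C * y))))|
      ≤ (1 - ζ) * |x - y| := by
  have hd : ∀ z : ℝ, HasDerivAt (fun z : ℝ => Real.exp (-(C * Real.exp (-(C * z)))))
      (C * (C * Real.exp (-(C * z)) * Real.exp (-(C * Real.exp (-(C * z)))))) z := by
    intro z
    have h1 : HasDerivAt (fun z : ℝ => -(C * z)) (-(C * 1)) z :=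
      ((hasDerivAt_id z).const_mul C).neg
    have h2 : HasDerivAt (fun z : ℝ => Real.exp (-(C * Real.exp (-(C * z))))) _ z :=
      ((h1.exp.const_mul C).neg).exp
    convert h2 using 1
    simp only [Pi.neg_apply]
    ring
  have := Convex.norm_image_sub_le_of_norm_hasDerivWithin_le (s := Set.univ) (C := 1 - ζ)
    (fun z _ => (hd z).hasDerivWithinAt) (by
      intro z _
      set u := C * Real.exp (-(C * z)) with hu
      have hu0 : 0 < u := by positivity
      rw [Real.norm_eq_abs, abs_of_nonneg (by positivity)]
      have h1 : u * Real.exp (-u) ≤ Real.exp (-1) := by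
        have h2 := Real.add_one_le_exp (u - 1)
        have h3 : Real.exp (-1) = Real.exp (u - 1) * Real.exp (-u) := by
          rw [← Real.exp_add]; congr 1; ring
        rw [h3]
        exact mul_le_mul_of_nonneg_right (by linarith) (Real.exp_pos _).le
      calc C * (u * Real.exp (-u)) ≤ C * Real.exp (-1) :=
            mul_le_mul_of_nonneg_left h1 (by linarith)
        _ ≤ (1 - ζ) * Real.exp 1 * Real.exp (-1) :=
            mul_le_mul_of_nonneg_right hC2 (Real.exp_pos _).le
        _ = 1 - ζ := by rw [mul_assoc, ← Real.exp_add]; simp)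
    convex_univ (Set.mem_univ y) (Set.mem_univ x)
  simpa [Real.norm_eq_abs] using this

theorem aux_exp (p q B : ℝ) (hp : p ≤ B) (hq : q ≤ B) :
    |Real.exp p - Real.exp q| ≤ Real.exp B * |p - q| := by
  have key : ∀ p q : ℝ, p ≤ B → Real.exp p - Real.exp q ≤ Real.exp B * |p - q| := by
    intro p q hp
    have h1 := Real.add_one_le_exp (q - p)
    have h2 : Real.exp q = Real.exp p * Real.exp (q - p) := by
      rw [← Real.exp_add]; congr 1; ring
    have h3 : Real.exp p - Real.exp q ≤ Real.exp p * (p - q) := by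
      rw [h2]; nlinarith [Real.exp_pos p]
    have h4 : Real.exp p * (p - q) ≤ Real.exp p * |p - q| :=
      mul_le_mul_of_nonneg_left (le_abs_self _) (Real.exp_pos _).le
    have h5 : Real.exp p * |p - q| ≤ Real.exp B * |p - q| :=
      mul_le_mul_of_nonneg_right (Real.exp_le_exp.2 hp) (abs_nonneg _)
    linarith
  rw [abs_le]
  constructor
  · have := key q p hq
    rw [abs_sub_comm] at this
    linarith
  · exact key p q hp

theorem aux_half : Real.exp (1 / 2) ≤ 5 / 3 := by
  have h : Real.exp (1/2) * Real.exp (1/2) = Real.exp 1 := by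
    rw [← Real.exp_add]; norm_num
  nlinarith [Real.exp_one_lt_d9, Real.exp_pos (1/2)]

/-- **Convergence of the perturbed iterated map** (Hayes–Vigoda, Lemma 4.6).
Let `1 ≤ C ≤ (1-ζ)e`, `ξ > 0`, `g(x) = exp(-Cx)` with fixed point `μ`, and
`θ = ξζ/(8C)`. Let `h(I) = g(I) ± θ` and `t = ⌈(4/ζ)·ln(1 + 1/ξ)⌉. Then
`h^t([0,1]) ⊆ μ ± ξ`. -/
theorem stmt_11 (ζ C ξ μ θ : ℝ)
    (hζ : 0 < ζ)
    (hC1 : 1 ≤ C) (hC2 : C ≤ (1 - ζ) * Real.exp 1)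
    (hξ : 0 < ξ)
    (hμ : μ = Real.exp (-(C * μ)))
    (hθ : θ = ξ * ζ / (8 * C))
    -- the interval map h : I ↦ g(I) ± θ, where g(x) = exp(-Cx)
    (h : Set ℝ → Set ℝ)
    (hh : h = fun I => {z : ℝ | ∃ x ∈ I, |z - Real.exp (-(C * x))| ≤ θ})
    (t : ℕ) (ht : t = ⌈(4 / ζ) * Real.log (1 + 1 / ξ)⌉₊) :
    h^[t] (Set.Icc (0 : ℝ) 1) ⊆ Set.Icc (μ - ξ) (μ + ξ) := by
  have hC0 : 0 < C := by linarith
  have hθ0 : 0 < θ := by rw [hθ]; positivity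
  have hζ1 : ζ < 1 := by
    by_contra hcon
    have : (1 - ζ) * Real.exp 1 ≤ 0 :=
      mul_nonpos_of_nonpos_of_nonneg (by linarith) (Real.exp_pos _).le
    linarith
  have hCθ : C * θ = ξ * ζ / 8 := by rw [hθ]; field_simp
  have hθ8 : θ ≤ ξ * ζ / 8 := by nlinarith
  have hξζ : ξ * ζ ≤ ξ := by nlinarith
  have hμ0 : 0 < μ := by rw [hμ]; exact Real.exp_pos _
  have hμ1 : μ < 1 := by
    rw [hμ, Real.exp_lt_one_iff]
    have := mul_pos hC0 hμ0
    linarith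
  have hmem : ∀ k z, z ∈ h^[k+1] (Set.Icc (0 : ℝ) 1) →
      ∃ x ∈ h^[k] (Set.Icc (0 : ℝ) 1), |z - Real.exp (-(C * x))| ≤ θ := by
    intro k z hz
    rw [Function.iterate_succ_apply'] at hz
    rw [hh] at hz ⊢
    exact hz
  have h0 : ∀ z ∈ h^[0] (Set.Icc (0 : ℝ) 1), |z - μ| ≤ 1 := by
    intro z hz
    simp only [Function.iterate_zero, id_eq, Set.mem_Icc] at hz
    rw [abs_le]; constructor <;> linarith [hz.1, hz.2]
  have h1 : ∀ z ∈ h^[1] (Set.Icc (0 : ℝ) 1), |z - μ| ≤ 1 + θ := by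
    intro z hz
    obtain ⟨x, hx, hzx⟩ := hmem 0 z hz
    simp only [Function.iterate_zero, id_eq, Set.mem_Icc] at hx
    have e1 : Real.exp (-(C * x)) ≤ 1 := by
      rw [Real.exp_le_one_iff]
      have := mul_nonneg hC0.le hx.1
      linarith
    have e0 := Real.exp_pos (-(C * x))
    rw [abs_le] at hzx ⊢
    constructor <;> linarith [hzx.1, hzx.2]
  suffices hs : ∀ z ∈ h^[t] (Set.Icc (0 : ℝ) 1), |z - μ| ≤ ξ by
    intro z hz
    have := abs_le.1 (hs z hz)
    constructor <;> linarith [this.1, this.2]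
  have htl : (4 / ζ) * Real.log (1 + 1 / ξ) ≤ t := by rw [ht]; exact Nat.le_ceil _
  rcases lt_or_ge 4 (ξ * ζ) with hbig | hsmall
  · have ht1 : t ≤ 1 := by
      rw [ht, Nat.ceil_le]
      have hl : Real.log (1 + 1 / ξ) ≤ 1 / ξ := by
        have := Real.log_le_sub_one_of_pos (x := 1 + 1 / ξ) (by positivity)
        linarith
      calc (4 / ζ) * Real.log (1 + 1 / ξ) ≤ (4 / ζ) * (1 / ξ) :=
            mul_le_mul_of_nonneg_left hl (by positivity)
        _ = 4 / (ξ * ζ) := by field_simp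
        _ ≤ ((1 : ℕ) : ℝ) := by
            rw [div_le_iff₀ (by positivity)]; push_cast; linarith
    clear ht htl
    intro z hz
    interval_cases t
    · linarith [h0 z hz]
    · linarith [h1 z hz]
  · have hstep : ∀ k z, z ∈ h^[k+2] (Set.Icc (0 : ℝ) 1) →
        ∃ x ∈ h^[k] (Set.Icc (0 : ℝ) 1), |z - μ| ≤ (1 - ζ) * |x - μ| + ξ * ζ / 3 := by
      intro k z hz
      obtain ⟨y, hy, hzy⟩ := hmem (k+1) z hz
      obtain ⟨x, hx, hyx⟩ := hmem k y hy
      refine ⟨x, hx, ?_⟩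
      have hc := aux_contr ζ C hC1 hC2 x μ
      rw [← hμ, ← hμ] at hc
      have e0 := Real.exp_pos (-(C * x))
      have hyθ : -θ ≤ y := by linarith [(abs_le.1 hyx).1]
      have he := aux_exp (-(C * y)) (-(C * Real.exp (-(C * x)))) (1/2)
        (by nlinarith) (by nlinarith)
      have hab : |-(C * y) - -(C * Real.exp (-(C * x)))| ≤ ξ * ζ / 8 := by
        have : -(C * y) - -(C * Real.exp (-(C * x))) = -(C * (y - Real.exp (-(C * x)))) := by ring
        rw [this, abs_neg, abs_mul, abs_of_pos hC0, ← hCθ]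
        exact mul_le_mul_of_nonneg_left hyx hC0.le
      have he2 : Real.exp (1/2) * |-(C * y) - -(C * Real.exp (-(C * x)))| ≤ 5 / 3 * (ξ * ζ / 8) :=
        mul_le_mul aux_half hab (abs_nonneg _) (by norm_num)
      have t1 := abs_sub_le z (Real.exp (-(C * y))) μ
      have t2 := abs_sub_le (Real.exp (-(C * y))) (Real.exp (-(C * Real.exp (-(C * x))))) μ
      linarith
    have hind : ∀ r m, (∀ z ∈ h^[r] (Set.Icc (0 : ℝ) 1), |z - μ| ≤ 1 + ξ / 3) →
        ∀ z ∈ h^[2*m+r] (Set.Icc (0 : ℝ) 1), |z - μ| ≤ (1 - ζ)^m + ξ / 3 := by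
      intro r m hr
      induction m with
      | zero => simpa using hr
      | succ m ih =>
        intro z hz
        have e : 2 * (m + 1) + r = (2 * m + r) + 2 := by ring
        rw [e] at hz
        obtain ⟨x, hx, hzx⟩ := hstep _ z hz
        have := mul_le_mul_of_nonneg_left (ih x hx) (by linarith : 0 ≤ 1 - ζ)
        rw [pow_succ]
        linarith
    have hpow : ∀ m : ℕ, (t : ℝ) ≤ 2 * m + 1 → (1 - ζ)^m ≤ 2 / 3 * ξ := by
      intro m hm
      have a1 : (1 - ζ)^m ≤ Real.exp (-ζ * m) := by
        have : (1 - ζ) ≤ Real.exp (-ζ) := by linarith [Real.add_one_le_exp (-ζ)]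
        calc (1 - ζ)^m ≤ Real.exp (-ζ) ^ m := pow_le_pow_left₀ (by linarith) this m
          _ = Real.exp (-ζ * m) := by rw [← Real.exp_nat_mul]; congr 1; ring
      have a2 : 4 * Real.log (1 + 1 / ξ) ≤ ζ * (2 * m + 1) := by
        have : ζ * ((4 / ζ) * Real.log (1 + 1 / ξ)) ≤ ζ * (2 * m + 1) :=
          mul_le_mul_of_nonneg_left (htl.trans hm) hζ.le
        have e : ζ * ((4 / ζ) * Real.log (1 + 1 / ξ)) = 4 * Real.log (1 + 1 / ξ) := by
          field_simp
        linarith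
      have a3 : Real.exp (-ζ * m) ≤
          Real.exp (1/2) * (Real.exp (-Real.log (1 + 1 / ξ)) * Real.exp (-Real.log (1 + 1 / ξ))) := by
        rw [← Real.exp_add, ← Real.exp_add, Real.exp_le_exp]
        linarith
      have a4 : Real.exp (-Real.log (1 + 1 / ξ)) = ξ / (1 + ξ) := by
        rw [Real.exp_neg, Real.exp_log (by positivity)]
        field_simp
        ring
      have a5 : ξ / (1 + ξ) * (ξ / (1 + ξ)) ≤ ξ / 4 := by
        rw [div_mul_div_comm, div_le_iff₀ (by positivity)]
        nlinarith [mul_nonneg hξ.le (sq_nonneg (1 - ξ))]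
      rw [a4] at a3
      have a6 : Real.exp (1/2) * (ξ / (1 + ξ) * (ξ / (1 + ξ))) ≤ 5 / 3 * (ξ / 4) :=
        mul_le_mul aux_half a5 (by positivity) (by norm_num)
      linarith
    intro z hz
    obtain ⟨m, hm | hm⟩ : ∃ m, t = 2 * m + 0 ∨ t = 2 * m + 1 := ⟨t / 2, by omega⟩
    · have b := hpow m (by rw [hm]; push_cast; linarith)
      rw [hm] at hz
      have := hind 0 m (fun z hz => by linarith [h0 z hz]) z hz
      linarith
    · have b := hpow m (by rw [hm]; push_cast; linarith)
      rw [hm] at hz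
      have := hind 1 m (fun z hz => by linarith [h1 z hz]) z hz
      linarith
end

section
/- Let ζ ∈ (0,1), let C = (1−ζ)e, and let μ be the unique real number satisfying μ = exp(−Cμ). Then μ < (1−ζ/2)/C. -/
/-- **Observation 4.5** (Hayes–Vigoda). Let `ζ ∈ (0,1)`, `C = (1-ζ)e`, and let `μ`
satisfy `μ = exp(-Cμ)`. Then `μ < (1 - ζ/2)/C`. -/
theorem stmt_12 (ζ C μ : ℝ)
    (hζ0 : 0 < ζ) (hζ1 : ζ < 1)
    (hC : C = (1 - ζ) * Real.exp 1)
    (hμ : μ = Real.exp (-(C * μ))) :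
    μ < (1 - ζ / 2) / C := by
  have hz : 0 < 1 - ζ := by linarith
  have hCpos : 0 < C := by rw [hC]; positivity
  have hμpos : 0 < μ := by rw [hμ]; positivity
  rw [lt_div_iff₀ hCpos, mul_comm μ C]
  have hx : 0 < C * μ := mul_pos hCpos hμpos
  have key : C * μ * Real.exp (C * μ - 1) = 1 - ζ := by
    have h1 : μ * Real.exp (C * μ - 1) = Real.exp (-1) := by
      nth_rewrite 1 [hμ]
      rw [← Real.exp_add]
      congr 1
      ring
    have h2 : Real.exp 1 * Real.exp (-1) = 1 := by
      rw [← Real.exp_add]; simp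
    rw [mul_assoc, h1, hC, mul_assoc, h2, mul_one]
  have h3 := Real.add_one_le_exp (C * μ - 1)
  generalize C * μ = x at *
  have h4 : x * x ≤ 1 - ζ := by
    rw [← key]
    exact mul_le_mul_of_nonneg_left (by linarith) hx.le
  by_contra! h
  have h5 : 1 - ζ / 2 ≤ x := by linarith
  nlinarith
end

section
/- Let G = (V,E) be a triangle-free graph with maximum degree Δ, let 0 < β ≤ 1 and k ≥ Δ + 2/β. Let X be a uniformly random proper k-coloring of G. Then for every vertex v ∈ V, E[|A(X,v)|] ≥ k·(e^{−Δ/k} − β/2). -/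
theorem aux_num (x β : ℝ) (hx : 0 ≤ x) (hβ : 0 < β) :
    Real.exp (-x) - β / 2 ≤ Real.exp (-(x * (1 + β))) := by
  have h1 : Real.exp (-(x * (1 + β))) = Real.exp (-x) * Real.exp (-(x * β)) := by
    rw [← Real.exp_add]; congr 1; ring
  have h2 : 1 - x * β ≤ Real.exp (-(x * β)) := by
    have := Real.add_one_le_exp (-(x * β)); linarith
  have h3 := Real.quadratic_le_exp_of_nonneg hx
  have h4 : 2 * x ≤ Real.exp x := by nlinarith [sq_nonneg (x - 1)]
  have h5 : Real.exp (-x) * x ≤ 1 / 2 := by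
    have : Real.exp (-x) * Real.exp x = 1 := by rw [← Real.exp_add]; simp
    nlinarith [Real.exp_pos (-x)]
  rw [h1]
  nlinarith [Real.exp_pos (-x), mul_le_mul_of_nonneg_left h2 (Real.exp_pos (-x)).le,
    mul_le_mul_of_nonneg_right h5 hβ.le]

theorem aux_erase {k : ℕ} (S : Finset (Fin k)) (c : Fin k) (h : 1 < (S.card : ℝ)) :
    (S.card : ℝ) * Real.exp (-(if c ∈ S then 1 / ((S.card : ℝ) - 1) else 0))
      ≤ ((S.erase c).card : ℝ) := by
  split_ifs with hc
  · have h0 : 0 < (S.card : ℝ) - 1 := by linarith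
    have h1 : ((S.erase c).card : ℝ) = S.card - 1 := by
      have := Finset.card_erase_add_one hc
      rw [← this]; push_cast; ring
    rw [h1, Real.exp_neg]
    have h2 := Real.add_one_le_exp (1 / ((S.card : ℝ) - 1))
    rw [← div_eq_mul_inv, div_le_iff₀ (Real.exp_pos _)]
    calc (S.card : ℝ) = (S.card - 1) * (1 / ((S.card : ℝ) - 1) + 1) := by field_simp; ring
      _ ≤ _ := mul_le_mul_of_nonneg_left h2 h0.le
  · simp [Finset.erase_eq_of_notMem hc]

theorem aux_core {V : Type*} {k : ℕ} (hk : 0 < k) (N : Finset V) (S : V → Finset (Fin k))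
    (β x : ℝ) (hβ : 0 < β)
    (hS : ∀ w ∈ N, 1 ≤ β * ((S w).card - 1)) (hx : (N.card : ℝ) ≤ x * k) :
    (k : ℝ) * Real.exp (-(x * (1 + β))) * ∏ w ∈ N, ((S w).card : ℝ)
      ≤ ∑ c : Fin k, ∏ w ∈ N, (((S w).erase c).card : ℝ) := by
  have hpos : ∀ w ∈ N, 0 < ((S w).card : ℝ) - 1 := by
    intro w hw
    by_contra h
    nlinarith [hS w hw]
  let g : Fin k → ℝ := fun c => ∑ w ∈ N, if c ∈ S w then 1 / (((S w).card : ℝ) - 1) else 0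
  have h1 : ∀ c : Fin k, (∏ w ∈ N, ((S w).card : ℝ)) * Real.exp (-(g c))
      ≤ ∏ w ∈ N, (((S w).erase c).card : ℝ) := by
    intro c
    rw [← Finset.sum_neg_distrib, Real.exp_sum, ← Finset.prod_mul_distrib]
    apply Finset.prod_le_prod
    · intro w hw; positivity
    · intro w hw; exact aux_erase _ _ (by linarith [hpos w hw])
  have hg : ∑ c, g c ≤ k * (x * (1 + β)) := by
    have : ∑ c, g c = ∑ w ∈ N, ((S w).card : ℝ) * (1 / (((S w).card : ℝ) - 1)) := by
      simp only [g]
      rw [Finset.sum_comm]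
      apply Finset.sum_congr rfl
      intro w hw
      simp [Finset.sum_ite]
    rw [this]
    calc _ ≤ ∑ w ∈ N, (1 + β) := by
          apply Finset.sum_le_sum
          intro w hw
          have := hpos w hw
          rw [mul_one_div, div_le_iff₀ this]
          linarith [hS w hw]
      _ = N.card * (1 + β) := by rw [Finset.sum_const, nsmul_eq_mul]
      _ ≤ (x * k) * (1 + β) := by gcongr
      _ = _ := by ring
  set L := x * (1 + β) with hL
  have h2 : ∀ c, Real.exp (-L) * (1 + L - g c) ≤ Real.exp (-(g c)) := by
    intro c
    have h := Real.add_one_le_exp (L - g c)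
    have e : Real.exp (-(g c)) = Real.exp (-L) * Real.exp (L - g c) := by
      rw [← Real.exp_add]; congr 1; ring
    rw [e]
    exact mul_le_mul_of_nonneg_left (by linarith) (Real.exp_pos _).le
  have h3 : (k : ℝ) * Real.exp (-L) ≤ ∑ c, Real.exp (-(g c)) := by
    refine le_trans ?_ (Finset.sum_le_sum fun c _ => h2 c)
    rw [← Finset.mul_sum, Finset.sum_sub_distrib]
    simp only [Finset.sum_const, Finset.card_univ, Fintype.card_fin, nsmul_eq_mul]
    rw [mul_comm]
    exact mul_le_mul_of_nonneg_left (by linarith) (Real.exp_pos _).le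
  calc _ ≤ (∑ c, Real.exp (-(g c))) * ∏ w ∈ N, ((S w).card : ℝ) :=
        mul_le_mul_of_nonneg_right h3 (Finset.prod_nonneg fun _ _ => by positivity)
    _ = ∑ c, (∏ w ∈ N, ((S w).card : ℝ)) * Real.exp (-(g c)) := by
        rw [mul_comm, Finset.mul_sum]
    _ ≤ _ := Finset.sum_le_sum fun c _ => h1 c

theorem aux_greedy {V : Type*} [Fintype V] [DecidableEq V]
    (G : SimpleGraph V) [DecidableRel G.Adj] (k : ℕ) (h : ∀ v, G.degree v < k) :
    ∃ X : V → Fin k, ∀ u v, G.Adj u v → X u ≠ X v := by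
  suffices H : ∀ s : Finset V, ∃ X : V → Fin k, ∀ u ∈ s, ∀ v ∈ s, G.Adj u v → X u ≠ X v by
    obtain ⟨X, hX⟩ := H Finset.univ
    exact ⟨X, fun u v => hX u (Finset.mem_univ _) v (Finset.mem_univ _)⟩
  intro s
  induction s using Finset.induction_on with
  | empty => exact ⟨fun v => ⟨0, (Nat.zero_le _).trans_lt (h v)⟩, by simp⟩
  | insert a s ha ih =>
    obtain ⟨X, hX⟩ := ih
    have : ∃ c : Fin k, c ∉ (G.neighborFinset a).image X := by
      by_contra hc
      push Not at hc
      have h1 : (Finset.univ : Finset (Fin k)) ⊆ (G.neighborFinset a).image X := fun c _ => hc c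
      have h2 := (Finset.card_le_card h1).trans Finset.card_image_le
      have h3 := h a
      simp at h2
      omega
    obtain ⟨c, hc⟩ := this
    have hc' : ∀ w, G.Adj a w → X w ≠ c := by
      intro w hw he
      exact hc (Finset.mem_image.2 ⟨w, by simpa using hw, he⟩)
    refine ⟨Function.update X a c, ?_⟩
    intro u hu v hv huv
    have hne := huv.ne
    by_cases h1 : u = a
    · subst h1
      rw [Function.update_self, Function.update_of_ne hne.symm]
      exact (hc' v huv).symm
    · rw [Function.update_of_ne h1]
      by_cases h2 : v = a
      · subst h2
        rw [Function.update_self]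
        exact hc' u huv.symm
      · rw [Function.update_of_ne h2]
        exact hX u (Finset.mem_of_mem_insert_of_ne hu h1) v (Finset.mem_of_mem_insert_of_ne hv h2) huv

theorem aux_pi_card {V : Type*} [Fintype V] [DecidableEq V] {k : ℕ} (N : Finset V)
    (S : V → Finset (Fin k)) (Y : V → Fin k) :
    ((Fintype.piFinset fun u => if u ∈ N then S u else {Y u}).card : ℝ)
      = ∏ w ∈ N, ((S w).card : ℝ) := by
  rw [Fintype.card_piFinset]
  push_cast
  rw [← Finset.prod_subset (Finset.subset_univ N)]
  · exact Finset.prod_congr rfl fun w hw => by simp [hw]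
  · intro w _ hw; simp [hw]

/-- **Expected number of available colors** (from the proof of Lemma 2.1).
For a triangle-free graph with maximum degree `Δ`, `0 < β ≤ 1` and `k ≥ Δ + 2/β`,
a uniformly random proper `k`-coloring `X` satisfies
`E[|A(X,v)|] ≥ k(e^{-Δ/k} - β/2)` for every vertex `v`. -/
theorem stmt_16 {V : Type*} [Fintype V] [DecidableEq V]
    (G : SimpleGraph V) [DecidableRel G.Adj]
    (Δ k : ℕ)
    (htriangle : G.CliqueFree 3)
    (hΔ : ∀ v, G.degree v ≤ Δ)
    (β : ℝ) (hβ0 : 0 < β) (hβ1 : β ≤ 1)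
    (hk : (k : ℝ) ≥ (Δ : ℝ) + 2 / β)
    -- the set of proper k-colorings
    (proper : Finset (V → Fin k))
    (hproper : proper = Finset.univ.filter fun X : V → Fin k =>
      ∀ u v, G.Adj u v → X u ≠ X v)
    -- A(X,v): the set of colors not appearing in the neighborhood of v
    (A : (V → Fin k) → V → Finset (Fin k))
    (hA : ∀ X v, A X v = Finset.univ.filter fun c => ∀ w ∈ G.neighborFinset v, X w ≠ c) :
    ∀ v : V,
      (∑ X ∈ proper, ((A X v).card : ℝ)) / (proper.card : ℝ)
        ≥ (k : ℝ) * (Real.exp (-(Δ : ℝ) / (k : ℝ)) - β / 2) := by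
  intro v
  classical
  have h2β : 2 ≤ 2 / β := by rw [le_div_iff₀ hβ0]; linarith
  have hΔ0 : (0 : ℝ) ≤ Δ := Nat.cast_nonneg _
  have hkpos : (0 : ℝ) < k := by linarith
  have hk0 : 0 < k := by exact_mod_cast hkpos
  have hΔk : Δ < k := by
    have : (Δ : ℝ) < k := by linarith
    exact_mod_cast this
  have hne : proper.Nonempty := by
    obtain ⟨X, hX⟩ := aux_greedy G k fun v => (hΔ v).trans_lt hΔk
    exact ⟨X, by simp [hproper]; exact hX⟩
  have hcard : (0 : ℝ) < proper.card := by exact_mod_cast hne.card_pos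
  have hAcard : ∀ X w, 1 ≤ β * (((A X w).card : ℝ) - 1) := by
    intro X w
    have h1 : (Finset.univ : Finset (Fin k)) ⊆ A X w ∪ (G.neighborFinset w).image X := by
      intro c _
      by_cases hc : c ∈ (G.neighborFinset w).image X
      · exact Finset.mem_union_right _ hc
      · apply Finset.mem_union_left
        rw [hA]
        simp only [Finset.mem_filter, Finset.mem_univ, true_and]
        intro u hu he
        exact hc (Finset.mem_image.2 ⟨u, hu, he⟩)
    have h2 := (Finset.card_le_card h1).trans (Finset.card_union_le _ _)
    have h3 : ((G.neighborFinset w).image X).card ≤ Δ :=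
      Finset.card_image_le.trans (by simpa using hΔ w)
    have h4 : k ≤ (A X w).card + Δ := by
      simp only [Finset.card_univ, Fintype.card_fin] at h2
      omega
    have h5 : (k : ℝ) ≤ (A X w).card + Δ := by exact_mod_cast h4
    have h6 : 2 / β ≤ (A X w).card := by linarith
    rw [div_le_iff₀ hβ0] at h6
    linarith
  set N := G.neighborFinset v with hN
  set x : ℝ := (Δ : ℝ) / k with hx
  have hx0 : 0 ≤ x := by positivity
  set K : ℝ := (k : ℝ) * Real.exp (-(x * (1 + β))) with hK
  have hNx : (N.card : ℝ) ≤ x * k := by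
    rw [hx, div_mul_cancel₀ _ hkpos.ne']
    have := hΔ v
    rw [← SimpleGraph.card_neighborFinset_eq_degree] at this
    exact_mod_cast this
  -- no edges inside the neighborhood
  have htri : ∀ a ∈ N, ∀ b ∈ N, ¬ G.Adj a b := by
    intro a ha b hb hab
    rw [hN, SimpleGraph.mem_neighborFinset] at ha hb
    exact htriangle {v, a, b} (SimpleGraph.is3Clique_triple_iff.2 ⟨ha, hb, hab⟩)
  let r : (V → Fin k) → ({u // u ∉ N} → Fin k) := fun X u => X u.1
  have hmain : 0 ≤ ∑ X ∈ proper, (((A X v).card : ℝ) - K) := by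
    rw [← Finset.sum_fiberwise_of_maps_to (t := proper.image r) (g := r)
      (fun X hX => Finset.mem_image_of_mem r hX)]
    apply Finset.sum_nonneg
    intro y hy
    obtain ⟨Y, hY, rfl⟩ := Finset.mem_image.1 hy
    have hYp : ∀ u w, G.Adj u w → Y u ≠ Y w := by
      rw [hproper] at hY
      simpa using hY
    have hfib : proper.filter (fun X => r X = r Y)
        = Fintype.piFinset fun u => if u ∈ N then A Y u else {Y u} := by
      ext X
      rw [Finset.mem_filter, Fintype.mem_piFinset, hproper]
      simp only [Finset.mem_filter, Finset.mem_univ, true_and]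
      constructor
      · rintro ⟨hX, hr⟩ u
        have hr' : ∀ w, w ∉ N → X w = Y w := fun w hw => congrFun hr ⟨w, hw⟩
        split_ifs with hu
        · rw [hA]
          simp only [Finset.mem_filter, Finset.mem_univ, true_and]
          intro w hw
          rw [SimpleGraph.mem_neighborFinset] at hw
          rw [← hr' w (fun hwN => htri u hu w hwN hw)]
          exact hX w u hw.symm
        · simpa using hr' u hu
      · intro hX
        have hr' : ∀ w, w ∉ N → X w = Y w := fun w hw => by simpa [hw] using hX w
        have hin : ∀ u ∈ N, ∀ w, G.Adj u w → X u ≠ X w := by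
          intro u hu w huw
          have h1 := hX u
          rw [if_pos hu, hA] at h1
          simp only [Finset.mem_filter, Finset.mem_univ, true_and] at h1
          rw [hr' w (fun hwN => htri u hu w hwN huw)]
          exact (h1 w (by simpa using huw)).symm
        refine ⟨?_, funext fun w => hr' w.1 w.2⟩
        intro u w huw
        by_cases hu : u ∈ N
        · exact hin u hu w huw
        · by_cases hw : w ∈ N
          · exact (hin w hw u huw.symm).symm
          · rw [hr' u hu, hr' w hw]
            exact hYp u w huw
    have hsum : ∑ X ∈ Fintype.piFinset (fun u => if u ∈ N then A Y u else {Y u}),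
        ((A X v).card : ℝ) = ∑ c : Fin k, ∏ w ∈ N, (((A Y w).erase c).card : ℝ) := by
      have h1 : ∀ X, ((A X v).card : ℝ) = ∑ c : Fin k, if ∀ w ∈ N, X w ≠ c then (1 : ℝ) else 0 := by
        intro X
        rw [hA, Finset.sum_boole]
      simp_rw [h1]
      rw [Finset.sum_comm]
      apply Finset.sum_congr rfl
      intro c _
      rw [Finset.sum_boole, ← aux_pi_card N (fun w => (A Y w).erase c) Y]
      congr 2
      ext X
      simp only [Finset.mem_filter, Fintype.mem_piFinset]
      constructor
      · rintro ⟨h1, h2⟩ u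
        have := h1 u
        split_ifs with hu
        · rw [if_pos hu] at this
          exact Finset.mem_erase.2 ⟨h2 u hu, this⟩
        · rwa [if_neg hu] at this
      · intro h1
        refine ⟨fun u => ?_, fun w hw => ?_⟩
        · have := h1 u
          split_ifs with hu
          · rw [if_pos hu] at this
            exact Finset.mem_of_mem_erase this
          · rwa [if_neg hu] at this
        · have := h1 w
          rw [if_pos hw] at this
          exact Finset.ne_of_mem_erase this
    rw [hfib, Finset.sum_sub_distrib, hsum, Finset.sum_const, nsmul_eq_mul, aux_pi_card]
    have := aux_core hk0 N (A Y) β x hβ0 (fun w _ => hAcard Y w) hNx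
    rw [← hK] at this
    linarith
  rw [Finset.sum_sub_distrib, Finset.sum_const, nsmul_eq_mul] at hmain
  rw [ge_iff_le, le_div_iff₀ hcard]
  have hnum := aux_num x β hx0 hβ0
  have hneg : -(Δ : ℝ) / k = -x := by rw [hx, neg_div]
  rw [hneg]
  have h1 : (k : ℝ) * (Real.exp (-x) - β / 2) ≤ K := mul_le_mul_of_nonneg_left hnum hkpos.le
  have h2 := mul_le_mul_of_nonneg_right h1 hcard.le
  linarith
end

section
/- Let ζ, ξ ∈ (0,1], let 1 ≤ C ≤ (1−ζ)e, let μ be the unique real number satisfying μ = exp(−Cμ), and set θ = ξζ/(8C). Then for every x with ξ/2 ≤ x ≤ 1, both of the following inequalities hold: (i) μx + θ ≤ x(1 − ζ/4)/C, and (ii) μ(e^x − 1) + θ ≤ −ln(1 − x(1 − ζ/4))/C. -/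
/-- **The two key inequalities in the proof of Lemma 4.6** (Hayes–Vigoda).
Let `ζ, ξ ∈ (0,1]`, `1 ≤ C ≤ (1-ζ)e`, let `μ` satisfy `μ = exp(-Cμ)`, and set
`θ = ξζ/(8C)`. Then for every `x ∈ [ξ/2, 1]`:
(i) `μx + θ ≤ x(1 - ζ/4)/C`, and (ii) `μ(e^x - 1) + θ ≤ -ln(1 - x(1 - ζ/4))/C`. -/
theorem stmt_19 (ζ ξ C μ θ : ℝ)
    (hζ0 : 0 < ζ) (hζ1 : ζ ≤ 1)
    (hξ0 : 0 < ξ) (hξ1 : ξ ≤ 1)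
    (hC1 : 1 ≤ C) (hC2 : C ≤ (1 - ζ) * Real.exp 1)
    (hμ : μ = Real.exp (-(C * μ)))
    (hθ : θ = ξ * ζ / (8 * C)) :
    ∀ x : ℝ, ξ / 2 ≤ x → x ≤ 1 →
      μ * x + θ ≤ x * (1 - ζ / 4) / C ∧
      μ * (Real.exp x - 1) + θ ≤ -Real.log (1 - x * (1 - ζ / 4)) / C := by
  intro x hx1 hx2
  have hC : 0 < C := by linarith
  have hx0 : 0 < x := by linarith
  have hμ0 : 0 < μ := by rw [hμ]; exact Real.exp_pos _
  have hp0 : 0 < C * μ := by positivity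
  have hp : C * μ ≤ 1 - ζ / 2 := by
    have h1 : C * μ * Real.exp (C * μ) = C := by
      have h2 : μ * Real.exp (C * μ) = 1 := by
        nth_rewrite 1 [hμ]
        rw [← Real.exp_add]; simp
      rw [mul_assoc, h2, mul_one]
    have h3 : C * μ * Real.exp 1 ≤ Real.exp (C * μ) := by
      have h4 := Real.add_one_le_exp (C * μ - 1)
      have h5 : Real.exp (C * μ) = Real.exp (C * μ - 1) * Real.exp 1 := by
        rw [← Real.exp_add]; simp
      rw [h5]
      apply mul_le_mul_of_nonneg_right _ (Real.exp_pos 1).le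
      linarith
    have h6 : (C * μ) ^ 2 * Real.exp 1 ≤ (1 - ζ) * Real.exp 1 := by
      have := mul_le_mul_of_nonneg_left h3 hp0.le
      nlinarith
    have h7 : (C * μ) ^ 2 ≤ 1 - ζ := le_of_mul_le_mul_right h6 (Real.exp_pos 1)
    nlinarith [sq_nonneg ζ]
  have hθC : θ * C ≤ x * ζ / 4 := by
    have : θ * C = ξ * ζ / 8 := by rw [hθ]; field_simp
    rw [this]; nlinarith
  constructor
  · rw [le_div_iff₀ hC]
    nlinarith
  · rw [le_div_iff₀ hC]
    obtain ⟨a, ha⟩ : ∃ a, a = 1 - ζ / 4 := ⟨_, rfl⟩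
    rw [← ha]
    have ha1 : a < 1 := by linarith
    have ha2 : 3 / 4 ≤ a := by linarith
    have hy0 : 0 < x * a := by positivity
    have hy1 : x * a < 1 := by nlinarith
    have hlog : x * a + (x * a) ^ 2 / 2 + (x * a) ^ 3 / 3 ≤ -Real.log (1 - x * a) := by
      have h := Real.hasSum_pow_div_log_of_abs_lt_one (x := x * a)
        (by rw [abs_of_pos hy0]; exact hy1)
      have h2 := sum_le_hasSum (Finset.range 3) (fun i _ => by positivity) h
      norm_num [Finset.sum_range_succ] at h2
      linarith
    have hexp : Real.exp x - 1 ≤ x + x ^ 2 / 2 + x ^ 3 * (2 / 9) := by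
      have h := Real.exp_bound' hx0.le hx2 (n := 3) (by norm_num)
      norm_num [Finset.sum_range_succ, Nat.factorial] at h
      linarith
    have hE : 0 ≤ Real.exp x - 1 := by
      have := Real.add_one_le_exp x
      linarith
    have hz : ζ = 4 * (1 - a) := by linarith
    subst hz
    have s1 : C * μ * (Real.exp x - 1) ≤ (2 * a - 1) * (x + x ^ 2 / 2 + x ^ 3 * (2 / 9)) := by
      apply mul_le_mul (by linarith) hexp hE (by linarith)
    have s2 : (2 * a - 1) * (x ^ 2 / 2) ≤ (x * a) ^ 2 / 2 := by
      nlinarith [sq_nonneg (x * (a - 1))]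
    have s3 : (2 * a - 1) * (x ^ 3 * (2 / 9)) ≤ (x * a) ^ 3 / 3 := by
      have : (2 * a - 1) * (2 / 9) ≤ a ^ 3 / 3 := by
        nlinarith [sq_nonneg (a - 1), mul_nonneg (sq_nonneg a) (sub_nonneg.2 ha2)]
      have := mul_le_mul_of_nonneg_left this (pow_pos hx0 3).le
      nlinarith
    nlinarith
end
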